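/- arXiv:1106.1909 — 3 statements merged into one kernel-verified Lean document; each statement's English description precedes it below -/
import Mathlib

section
/- A ℂ-algebra automorphism θ of V = Ǔ^{≥0}_{r,s}(sl_3) satisfies (θ ⊗ θ) ∘ Δ = Δ ∘ θ (i.e., θ is a Hopf algebra automorphism) if and only if θ(K_1) = K_1, θ(K_2) = K_2, and there exist b_1, b_2 ∈ ℂ^* with θ(E_1) = b_1 E_1 and θ(E_2) = b_2 E_2. Consequently, the group of Hopf algebra automorphisms of V is isomorphic to the group (ℂ^*)^2. -/
/-!
Write `ω₁ = K₁²K₂⁻¹` and `ω₂ = K₁⁻¹K₂²` for the grouplike parts of `E₁` and `E₂`. The key point is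
that the character `χ` with `χ(K₁) = ρσ⁻¹`, `χ(K₂) = ρ`, `χ(E₁) = χ(E₂) = 0` satisfies
`K₁ ((id ⊗ χ)Δ(v)) = ((χ ⊗ id)Δ(v)) K₁` for all `v` (`K₁_mul_rtr`): left and right translation by
`χ` differ by conjugation by `K₁`. Information about `Δ(v)` thus becomes information about the
weight of `v` under conjugation by `K₁`. Because `r` and `s` are multiplicatively independent,
these weights determine the degree `(p, q)` in `(E₁, E₂)`, and the values of `χ` determine a torus
monomial `K₁^a K₂^b`. No PBW basis is needed: only the components of degrees `(0,0)`, `(1,0)` and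
`(0,1)` have to be described, and there a spanning set suffices (`wtSub`, `exists_mem_wtSub`).

A grouplike unit commutes with `K₁`, so it lies in the span of the torus monomials, and hence is
one of them (`grouplike_eq_Kp`). If `θ` is a Hopf automorphism, then `θ(E_i)` is skew-primitive, so
it is homogeneous of some degree `(p, q)` and `θ(ω_i) = ω₁^p ω₂^q` (`IsHopf.skew_data`). The same
holds for `θ⁻¹`, so the two exponent matrices are mutually inverse matrices of natural numbers,
that is, permutation matrices. The swap of `E₁` and `E₂` would force `rs = 1`. In the remaining
case `θ(E_i)` is an invariant torus multiple of `E_i`, hence a scalar multiple of `E_i`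
(`eq_smul_of_mem_span`), and `θ` fixes `ω₁` and `ω₂`; these generate a subgroup of index 3 in the
torsion-free group of torus monomials, so `θ` fixes `K₁` and `K₂` (`IsHopf.images`).

Conversely, scaling `E₁` and `E₂` by nonzero scalars preserves the relations and commutes with `Δ`.
This gives an injective homomorphism `scaleHom` from `(ℂ*)²` to the automorphism group, whose range
is the group of Hopf automorphisms.
-/

noncomputable section

open FreeAlgebra

/-- The defining relations of the augmented Hopf algebra `Ǔ^{≥0}_{r,s}(sl₃)` (with
`r = ρ³`, `s = σ³`) as a quotient of the free algebra on six generators: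
generator `0` is `E₁`, `1` is `E₂`, `2` is `K₁`, `3` is `K₁⁻¹`, `4` is `K₂`, `5` is `K₂⁻¹`. -/
inductive VRel (ρ σ : ℂ) : FreeAlgebra ℂ (Fin 6) → FreeAlgebra ℂ (Fin 6) → Prop
  | k1inv : VRel ρ σ (ι ℂ (2 : Fin 6) * ι ℂ 3) 1
  | invk1 : VRel ρ σ (ι ℂ (3 : Fin 6) * ι ℂ 2) 1
  | k2inv : VRel ρ σ (ι ℂ (4 : Fin 6) * ι ℂ 5) 1
  | invk2 : VRel ρ σ (ι ℂ (5 : Fin 6) * ι ℂ 4) 1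
  | k1k2 : VRel ρ σ (ι ℂ (2 : Fin 6) * ι ℂ 4) (ι ℂ (4 : Fin 6) * ι ℂ 2)
  | k1e1 : VRel ρ σ (ι ℂ (2 : Fin 6) * ι ℂ 0) ((ρ * (σ ^ 2)⁻¹) • (ι ℂ (0 : Fin 6) * ι ℂ 2))
  | k1e2 : VRel ρ σ (ι ℂ (2 : Fin 6) * ι ℂ 1) ((ρ * σ) • (ι ℂ (1 : Fin 6) * ι ℂ 2))
  | k2e1 : VRel ρ σ (ι ℂ (4 : Fin 6) * ι ℂ 0) ((ρ⁻¹ * σ⁻¹) • (ι ℂ (0 : Fin 6) * ι ℂ 4))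
  | k2e2 : VRel ρ σ (ι ℂ (4 : Fin 6) * ι ℂ 1) ((ρ ^ 2 * σ⁻¹) • (ι ℂ (1 : Fin 6) * ι ℂ 4))
  | serre1 : VRel ρ σ
      (ι ℂ (0 : Fin 6) * ι ℂ 0 * ι ℂ 1 - (ρ ^ 3 + σ ^ 3) • (ι ℂ (0 : Fin 6) * ι ℂ 1 * ι ℂ 0)
        + (ρ ^ 3 * σ ^ 3) • (ι ℂ (1 : Fin 6) * ι ℂ 0 * ι ℂ 0)) 0
  | serre2 : VRel ρ σ
      (ι ℂ (0 : Fin 6) * ι ℂ 1 * ι ℂ 1 - (ρ ^ 3 + σ ^ 3) • (ι ℂ (1 : Fin 6) * ι ℂ 0 * ι ℂ 1)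
        + (ρ ^ 3 * σ ^ 3) • (ι ℂ (1 : Fin 6) * ι ℂ 1 * ι ℂ 0)) 0

/-- The augmented Hopf algebra `Ǔ^{≥0}_{r,s}(sl₃)`. -/
abbrev Vsl3 (ρ σ : ℂ) := RingQuot (VRel ρ σ)

def vE₁ (ρ σ : ℂ) : Vsl3 ρ σ := RingQuot.mkAlgHom ℂ (VRel ρ σ) (ι ℂ 0)
def vE₂ (ρ σ : ℂ) : Vsl3 ρ σ := RingQuot.mkAlgHom ℂ (VRel ρ σ) (ι ℂ 1)
def K₁ (ρ σ : ℂ) : Vsl3 ρ σ := RingQuot.mkAlgHom ℂ (VRel ρ σ) (ι ℂ 2)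
def K₁inv (ρ σ : ℂ) : Vsl3 ρ σ := RingQuot.mkAlgHom ℂ (VRel ρ σ) (ι ℂ 3)
def K₂ (ρ σ : ℂ) : Vsl3 ρ σ := RingQuot.mkAlgHom ℂ (VRel ρ σ) (ι ℂ 4)
def K₂inv (ρ σ : ℂ) : Vsl3 ρ σ := RingQuot.mkAlgHom ℂ (VRel ρ σ) (ι ℂ 5)
def vE₃ (ρ σ : ℂ) : Vsl3 ρ σ := vE₁ ρ σ * vE₂ ρ σ - σ ^ 3 • (vE₂ ρ σ * vE₁ ρ σ)

/-- Integer powers of `K₁`: for negative `m`, `K₁^m` means `(K₁⁻¹)^(-m)`. -/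
def K₁z (ρ σ : ℂ) (m : ℤ) : Vsl3 ρ σ :=
  if 0 ≤ m then K₁ ρ σ ^ m.toNat else K₁inv ρ σ ^ (-m).toNat

/-- Integer powers of `K₂`: for negative `n`, `K₂^n` means `(K₂⁻¹)^(-n)`. -/
def K₂z (ρ σ : ℂ) (n : ℤ) : Vsl3 ρ σ :=
  if 0 ≤ n then K₂ ρ σ ^ n.toNat else K₂inv ρ σ ^ (-n).toNat

open scoped TensorProduct

/-! ### Generators, induction and the universal property -/

/-- The relations of `V` for a tuple of elements `e₁, e₂, k₁, k₁⁻¹, k₂, k₂⁻¹` of an algebra. -/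
structure VRelations (ρ σ : ℂ) {B : Type*} [Ring B] [Algebra ℂ B]
    (e₁ e₂ k₁ k₁' k₂ k₂' : B) : Prop where
  k1inv : k₁ * k₁' = 1
  invk1 : k₁' * k₁ = 1
  k2inv : k₂ * k₂' = 1
  invk2 : k₂' * k₂ = 1
  k1k2 : k₁ * k₂ = k₂ * k₁
  k1e1 : k₁ * e₁ = (ρ * (σ ^ 2)⁻¹) • (e₁ * k₁)
  k1e2 : k₁ * e₂ = (ρ * σ) • (e₂ * k₁)
  k2e1 : k₂ * e₁ = (ρ⁻¹ * σ⁻¹) • (e₁ * k₂)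
  k2e2 : k₂ * e₂ = (ρ ^ 2 * σ⁻¹) • (e₂ * k₂)
  serre1 : e₁ * e₁ * e₂ - (ρ ^ 3 + σ ^ 3) • (e₁ * e₂ * e₁)
    + (ρ ^ 3 * σ ^ 3) • (e₂ * e₁ * e₁) = 0
  serre2 : e₁ * e₂ * e₂ - (ρ ^ 3 + σ ^ 3) • (e₂ * e₁ * e₂)
    + (ρ ^ 3 * σ ^ 3) • (e₂ * e₂ * e₁) = 0

lemma vRelations_gen (ρ σ : ℂ) :
    VRelations ρ σ (vE₁ ρ σ) (vE₂ ρ σ) (K₁ ρ σ) (K₁inv ρ σ) (K₂ ρ σ) (K₂inv ρ σ) where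
  k1inv := by
    simpa [vE₁, vE₂, K₁, K₁inv, K₂, K₂inv] using
      RingQuot.mkAlgHom_rel ℂ (VRel.k1inv (ρ := ρ) (σ := σ))
  invk1 := by
    simpa [vE₁, vE₂, K₁, K₁inv, K₂, K₂inv] using
      RingQuot.mkAlgHom_rel ℂ (VRel.invk1 (ρ := ρ) (σ := σ))
  k2inv := by
    simpa [vE₁, vE₂, K₁, K₁inv, K₂, K₂inv] using
      RingQuot.mkAlgHom_rel ℂ (VRel.k2inv (ρ := ρ) (σ := σ))
  invk2 := by
    simpa [vE₁, vE₂, K₁, K₁inv, K₂, K₂inv] using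
      RingQuot.mkAlgHom_rel ℂ (VRel.invk2 (ρ := ρ) (σ := σ))
  k1k2 := by
    simpa only [K₁, K₂, map_mul] using RingQuot.mkAlgHom_rel ℂ (VRel.k1k2 (ρ := ρ) (σ := σ))
  k1e1 := by
    simpa only [vE₁, vE₂, K₁, K₂, map_mul, map_smul] using
      RingQuot.mkAlgHom_rel ℂ (VRel.k1e1 (ρ := ρ) (σ := σ))
  k1e2 := by
    simpa only [vE₁, vE₂, K₁, K₂, map_mul, map_smul] using
      RingQuot.mkAlgHom_rel ℂ (VRel.k1e2 (ρ := ρ) (σ := σ))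
  k2e1 := by
    simpa only [vE₁, vE₂, K₁, K₂, map_mul, map_smul] using
      RingQuot.mkAlgHom_rel ℂ (VRel.k2e1 (ρ := ρ) (σ := σ))
  k2e2 := by
    simpa only [vE₁, vE₂, K₁, K₂, map_mul, map_smul] using
      RingQuot.mkAlgHom_rel ℂ (VRel.k2e2 (ρ := ρ) (σ := σ))
  serre1 := by
    simpa only [vE₁, vE₂, map_add, map_sub, map_mul, map_smul, map_zero] using
      RingQuot.mkAlgHom_rel ℂ (VRel.serre1 (ρ := ρ) (σ := σ))
  serre2 := by
    simpa only [vE₁, vE₂, map_add, map_sub, map_mul, map_smul, map_zero] using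
      RingQuot.mkAlgHom_rel ℂ (VRel.serre2 (ρ := ρ) (σ := σ))

lemma V_lift {ρ σ : ℂ} {B : Type*} [Ring B] [Algebra ℂ B]
    {e₁ e₂ k₁ k₁' k₂ k₂' : B} (h : VRelations ρ σ e₁ e₂ k₁ k₁' k₂ k₂') :
    ∃ f : Vsl3 ρ σ →ₐ[ℂ] B, f (vE₁ ρ σ) = e₁ ∧ f (vE₂ ρ σ) = e₂ ∧
      f (K₁ ρ σ) = k₁ ∧ f (K₂ ρ σ) = k₂ := by
  refine ⟨RingQuot.liftAlgHom ℂ ⟨FreeAlgebra.lift ℂ ![e₁, e₂, k₁, k₁', k₂, k₂'], ?_⟩,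
    ?_, ?_, ?_, ?_⟩
  · intro x y hxy
    cases hxy <;> simp only [map_add, map_sub, map_mul, map_smul, map_zero, map_one, lift_ι_apply]
    exacts [h.k1inv, h.invk1, h.k2inv, h.invk2, h.k1k2, h.k1e1, h.k1e2, h.k2e1, h.k2e2,
      h.serre1, h.serre2]
  · simp [vE₁]
  · simp [vE₂]
  · simp [K₁]
  · simp [K₂]

lemma V_induction {ρ σ : ℂ} {P : Vsl3 ρ σ → Prop}
    (hc : ∀ c : ℂ, P (algebraMap ℂ _ c)) (hadd : ∀ a b, P a → P b → P (a + b))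
    (hmul : ∀ a b, P a → P b → P (a * b))
    (h₁ : P (vE₁ ρ σ)) (h₂ : P (vE₂ ρ σ)) (h₃ : P (K₁ ρ σ)) (h₄ : P (K₁inv ρ σ))
    (h₅ : P (K₂ ρ σ)) (h₆ : P (K₂inv ρ σ)) (v : Vsl3 ρ σ) : P v := by
  obtain ⟨v, rfl⟩ := RingQuot.mkAlgHom_surjective ℂ (VRel ρ σ) v
  induction v using FreeAlgebra.induction with
  | grade0 c => simpa using hc c
  | grade1 i => fin_cases i <;> assumption
  | mul a b ha hb => simpa using hmul _ _ ha hb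
  | add a b ha hb => simpa using hadd _ _ ha hb

lemma V_hom_ext {ρ σ : ℂ} {B : Type*} [Ring B] [Algebra ℂ B] {f g : Vsl3 ρ σ →ₐ[ℂ] B}
    (h₁ : f (vE₁ ρ σ) = g (vE₁ ρ σ)) (h₂ : f (vE₂ ρ σ) = g (vE₂ ρ σ))
    (h₃ : f (K₁ ρ σ) = g (K₁ ρ σ)) (h₄ : f (K₂ ρ σ) = g (K₂ ρ σ)) : f = g := by
  have R := vRelations_gen ρ σ
  refine AlgHom.ext fun v => ?_
  induction v using V_induction with
  | hc c => simp
  | hadd a b ha hb => simp [ha, hb]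
  | hmul a b ha hb => simp [ha, hb]
  | h₁ => exact h₁
  | h₂ => exact h₂
  | h₃ => exact h₃
  | h₅ => exact h₄
  | h₄ =>
    refine left_inv_eq_right_inv (a := f (K₁ ρ σ)) ?_ ?_
    · rw [← map_mul, R.invk1, map_one]
    · rw [h₃, ← map_mul, R.k1inv, map_one]
  | h₆ =>
    refine left_inv_eq_right_inv (a := f (K₂ ρ σ)) ?_ ?_
    · rw [← map_mul, R.invk2, map_one]
    · rw [h₄, ← map_mul, R.k2inv, map_one]

/-- `E₁` acts by an elementary matrix in a two-dimensional module on which `E₂` acts by zero. -/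
lemma vE₁_ne_zero {ρ σ : ℂ} (hρ : ρ ≠ 0) (hσ : σ ≠ 0) : vE₁ ρ σ ≠ 0 := by
  obtain ⟨f, h₁, -⟩ := V_lift (ρ := ρ) (σ := σ) (B := Matrix (Fin 2) (Fin 2) ℂ)
    (e₁ := !![0, 1; 0, 0]) (e₂ := 0)
    (k₁ := !![ρ * (σ ^ 2)⁻¹, 0; 0, 1]) (k₁' := !![(ρ * (σ ^ 2)⁻¹)⁻¹, 0; 0, 1])
    (k₂ := !![ρ⁻¹ * σ⁻¹, 0; 0, 1]) (k₂' := !![(ρ⁻¹ * σ⁻¹)⁻¹, 0; 0, 1])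
    (by constructor <;> simp [Matrix.one_fin_two, mul_comm] <;> field_simp)
  intro h
  rw [h, map_zero] at h₁
  simpa using congrFun (congrFun h₁ 0) 1

lemma vE₂_ne_zero {ρ σ : ℂ} (hρ : ρ ≠ 0) (hσ : σ ≠ 0) : vE₂ ρ σ ≠ 0 := by
  obtain ⟨f, -, h₁, -⟩ := V_lift (ρ := ρ) (σ := σ) (B := Matrix (Fin 2) (Fin 2) ℂ)
    (e₁ := 0) (e₂ := !![0, 1; 0, 0])
    (k₁ := !![ρ * σ, 0; 0, 1]) (k₁' := !![(ρ * σ)⁻¹, 0; 0, 1])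
    (k₂ := !![ρ ^ 2 * σ⁻¹, 0; 0, 1]) (k₂' := !![(ρ ^ 2 * σ⁻¹)⁻¹, 0; 0, 1])
    (by constructor <;> simp [Matrix.one_fin_two, mul_comm] <;> field_simp)
  intro h
  rw [h, map_zero] at h₁
  simpa using congrFun (congrFun h₁ 0) 1

/-! ### The torus -/

/-- `K₁` as a unit. -/
def uK₁ (ρ σ : ℂ) : (Vsl3 ρ σ)ˣ :=
  ⟨K₁ ρ σ, K₁inv ρ σ, (vRelations_gen ρ σ).k1inv, (vRelations_gen ρ σ).invk1⟩

/-- `K₂` as a unit. -/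
def uK₂ (ρ σ : ℂ) : (Vsl3 ρ σ)ˣ :=
  ⟨K₂ ρ σ, K₂inv ρ σ, (vRelations_gen ρ σ).k2inv, (vRelations_gen ρ σ).invk2⟩

lemma uK_commute (ρ σ : ℂ) : Commute (uK₁ ρ σ) (uK₂ ρ σ) :=
  Units.ext (vRelations_gen ρ σ).k1k2

/-- The torus monomial `K₁^a K₂^b`. -/
def Kp (ρ σ : ℂ) (a b : ℤ) : (Vsl3 ρ σ)ˣ := uK₁ ρ σ ^ a * uK₂ ρ σ ^ b

/-- The scalar `ρ^i σ^j`. -/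
def mon (ρ σ : ℂ) (i j : ℤ) : ℂ := ρ ^ i * σ ^ j

section torus

variable {ρ σ : ℂ}

lemma Kp_mul (a b c d : ℤ) : Kp ρ σ a b * Kp ρ σ c d = Kp ρ σ (a + c) (b + d) := by
  unfold Kp
  rw [zpow_add, zpow_add, mul_assoc, mul_assoc, ← mul_assoc (uK₂ ρ σ ^ b),
    (((uK_commute ρ σ).zpow_zpow c b).eq).symm, mul_assoc]

lemma Kp_zero : Kp ρ σ 0 0 = 1 := by simp [Kp]

lemma Kp_pow (a b : ℤ) (n : ℕ) : Kp ρ σ a b ^ n = Kp ρ σ (n * a) (n * b) := by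
  induction n with
  | zero => simp [Kp_zero]
  | succ n ih => rw [pow_succ, ih, Kp_mul]; push_cast; ring_nf

lemma Kp_zpow (a b n : ℤ) : Kp ρ σ a b ^ n = Kp ρ σ (n * a) (n * b) := by
  unfold Kp
  rw [((uK_commute ρ σ).zpow_zpow a b).mul_zpow, ← zpow_mul, ← zpow_mul, mul_comm a, mul_comm b]

lemma Kp_one_zero : (Kp ρ σ 1 0 : Vsl3 ρ σ) = K₁ ρ σ := by simp [Kp, uK₁]

lemma Kp_zero_one : (Kp ρ σ 0 1 : Vsl3 ρ σ) = K₂ ρ σ := by simp [Kp, uK₂]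

lemma Kp_neg_one_zero : (Kp ρ σ (-1) 0 : Vsl3 ρ σ) = K₁inv ρ σ := by simp [Kp, uK₁]

lemma Kp_zero_neg_one : (Kp ρ σ 0 (-1) : Vsl3 ρ σ) = K₂inv ρ σ := by simp [Kp, uK₂]

lemma omega₁_eq : K₁ ρ σ ^ 2 * K₂inv ρ σ = Kp ρ σ 2 (-1) := by
  rw [← Kp_one_zero, ← Kp_zero_neg_one, ← Units.val_pow_eq_pow_val, ← Units.val_mul, Kp_pow,
    Kp_mul]
  norm_num

lemma omega₂_eq : K₁inv ρ σ * K₂ ρ σ ^ 2 = Kp ρ σ (-1) 2 := by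
  rw [← Kp_neg_one_zero, ← Kp_zero_one, ← Units.val_pow_eq_pow_val, ← Units.val_mul, Kp_pow,
    Kp_mul]
  norm_num

lemma mon_inj (hρ : ρ ≠ 0) (hσ : σ ≠ 0)
    (hind : ∀ m n : ℤ, (ρ ^ 3) ^ m * (σ ^ 3) ^ n = 1 → m = 0 ∧ n = 0) {i j k l : ℤ}
    (h : mon ρ σ i j = mon ρ σ k l) : i = k ∧ j = l := by
  have h1 : ρ ^ (i - k) * σ ^ (j - l) = 1 := by
    rw [zpow_sub₀ hρ, zpow_sub₀ hσ, div_mul_div_comm]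
    unfold mon at h
    rw [h, div_self (mul_ne_zero (zpow_ne_zero _ hρ) (zpow_ne_zero _ hσ))]
  have h2 := hind (i - k) (j - l) (by
    rw [← zpow_natCast, ← zpow_natCast, ← zpow_mul, ← zpow_mul, mul_comm _ (i - k),
      mul_comm _ (j - l), zpow_mul, zpow_mul, ← mul_zpow, h1, one_zpow])
  omega

lemma mon_mul (hρ : ρ ≠ 0) (hσ : σ ≠ 0) (i j k l : ℤ) :
    mon ρ σ i j * mon ρ σ k l = mon ρ σ (i + k) (j + l) := by
  unfold mon
  rw [zpow_add₀ hρ, zpow_add₀ hσ]; ring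

lemma mon_zpow (i j n : ℤ) : mon ρ σ i j ^ n = mon ρ σ (i * n) (j * n) := by
  unfold mon
  rw [mul_zpow, zpow_mul, zpow_mul]

lemma mon_ne_zero (hρ : ρ ≠ 0) (hσ : σ ≠ 0) (i j : ℤ) : mon ρ σ i j ≠ 0 :=
  mul_ne_zero (zpow_ne_zero _ hρ) (zpow_ne_zero _ hσ)

lemma unit_zpow_mul {B : Type*} [Ring B] [Algebra ℂ B] (u : Bˣ) (e : B) {c : ℂ} (hc : c ≠ 0)
    (h : u * e = c • (e * u)) (n : ℤ) : ((u ^ n : Bˣ) : B) * e = c ^ n • (e * (u ^ n : Bˣ)) := by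
  set z : Bˣ := Units.map (algebraMap ℂ B).toMonoidHom (Units.mk0 c hc) with hz
  have hzu : Commute z u := Units.ext (Algebra.commutes c (u : B))
  have h1 : SemiconjBy e ((z * u : Bˣ) : B) u := by
    change e * (algebraMap ℂ B c * (u : B)) = u * e
    rw [h, ← Algebra.smul_def, mul_smul_comm]
  have hzn : ((z ^ n : Bˣ) : B) = algebraMap ℂ B (c ^ n) := by
    rw [hz, ← map_zpow, Units.coe_map, Units.val_zpow_eq_zpow_val]
    rfl
  rw [← (h1.units_zpow_right n).eq, hzu.mul_zpow, Units.val_mul, hzn, ← Algebra.smul_def,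
    mul_smul_comm]

lemma Kp_mul_vE₁ (hρ : ρ ≠ 0) (hσ : σ ≠ 0) (a b : ℤ) : (Kp ρ σ a b : Vsl3 ρ σ) * vE₁ ρ σ =
    mon ρ σ (a - b) (-2 * a - b) • (vE₁ ρ σ * Kp ρ σ a b) := by
  have R := vRelations_gen ρ σ
  have e1 : ρ * (σ ^ 2)⁻¹ = mon ρ σ 1 (-2) := by simp [mon, zpow_neg]
  have e2 : ρ⁻¹ * σ⁻¹ = mon ρ σ (-1) (-1) := by simp [mon, zpow_neg]
  have h1 := unit_zpow_mul (uK₁ ρ σ) (vE₁ ρ σ) (mon_ne_zero hρ hσ 1 (-2)) (e1 ▸ R.k1e1) a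
  have h2 := unit_zpow_mul (uK₂ ρ σ) (vE₁ ρ σ) (mon_ne_zero hρ hσ (-1) (-1)) (e2 ▸ R.k2e1) b
  unfold Kp
  rw [Units.val_mul, mul_assoc, h2, mul_smul_comm, ← mul_assoc, h1, smul_mul_assoc, smul_smul,
    mon_zpow, mon_zpow, mon_mul hρ hσ, mul_assoc]
  congr 2 <;> ring

lemma Kp_mul_vE₂ (hρ : ρ ≠ 0) (hσ : σ ≠ 0) (a b : ℤ) : (Kp ρ σ a b : Vsl3 ρ σ) * vE₂ ρ σ =
    mon ρ σ (a + 2 * b) (a - b) • (vE₂ ρ σ * Kp ρ σ a b) := by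
  have R := vRelations_gen ρ σ
  have e1 : ρ * σ = mon ρ σ 1 1 := by simp [mon]
  have e2 : ρ ^ 2 * σ⁻¹ = mon ρ σ 2 (-1) := by simp [mon, zpow_neg]
  have h1 := unit_zpow_mul (uK₁ ρ σ) (vE₂ ρ σ) (mon_ne_zero hρ hσ 1 1) (e1 ▸ R.k1e2) a
  have h2 := unit_zpow_mul (uK₂ ρ σ) (vE₂ ρ σ) (mon_ne_zero hρ hσ 2 (-1)) (e2 ▸ R.k2e2) b
  unfold Kp
  rw [Units.val_mul, mul_assoc, h2, mul_smul_comm, ← mul_assoc, h1, smul_mul_assoc, smul_smul,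
    mon_zpow, mon_zpow, mon_mul hρ hσ, mul_assoc]
  congr 2 <;> ring

end torus

/-! ### Weight spaces for conjugation by `K₁` -/

/-- An eigenvector lying in a sum of subspaces of eigenspaces with distinct eigenvalues
lies in one of those subspaces. -/
lemma eigen_mem {M ι : Type*} [AddCommGroup M] [Module ℂ M] (T : Module.End ℂ M)
    (S : ι → Submodule ℂ M) (μ : ι → ℂ) (hμ : Function.Injective μ)
    (hS : ∀ i, S i ≤ T.eigenspace (μ i)) {v : M} (hv : v ∈ ⨆ i, S i) {ν : ℂ}
    (hν : v ∈ T.eigenspace ν) (h0 : v ≠ 0) : ∃ i, μ i = ν ∧ v ∈ S i := by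
  have hdis := T.eigenspaces_iSupIndep ν
  by_cases h : ∃ i, μ i = ν
  · obtain ⟨i, rfl⟩ := h
    refine ⟨i, rfl, ?_⟩
    rw [iSup_split_single S i, Submodule.mem_sup] at hv
    obtain ⟨s, hs, t, ht, rfl⟩ := hv
    have ht1 : t ∈ T.eigenspace (μ i) := by
      simpa using Submodule.sub_mem _ hν (hS i hs)
    have ht2 : t ∈ ⨆ (κ) (_ : κ ≠ μ i), T.eigenspace κ := by
      refine (show (⨆ (k) (_ : k ≠ i), S k) ≤ _ from iSup₂_le fun k hk => ?_) ht
      exact (hS k).trans (le_iSup₂_of_le (μ k) (fun e => hk (hμ e)) le_rfl)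
    have : t = 0 := Submodule.disjoint_def.mp hdis t ht1 ht2
    simpa [this] using hs
  · refine absurd (Submodule.disjoint_def.mp hdis v hν ?_) h0
    refine (show (⨆ k, S k) ≤ _ from iSup_le fun k => ?_) hv
    exact (hS k).trans (le_iSup₂_of_le (μ k) (fun e => h ⟨k, e⟩) le_rfl)

/-- Conjugation by `K₁`. -/
def conjK₁ (ρ σ : ℂ) : Module.End ℂ (Vsl3 ρ σ) :=
  LinearMap.mulLeft ℂ (K₁ ρ σ) ∘ₗ LinearMap.mulRight ℂ (K₁inv ρ σ)

/-- The `K₁`-weight `(ρσ⁻²)^p (ρσ)^q` of a product of `p` factors `E₁` and `q` factors `E₂`. -/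
def wt (ρ σ : ℂ) (d : ℕ × ℕ) : ℂ := mon ρ σ (d.1 + d.2) (d.2 - 2 * d.1)

/-- Subspaces of the `K₁`-weight spaces of degree `(p, q)` in `(E₁, E₂)`: in degrees `(0, 0)`,
`(1, 0)` and `(0, 1)` they are spanned by the obvious monomials; in all other degrees the whole
weight space is taken. -/
def wtSub (ρ σ : ℂ) (d : ℕ × ℕ) : Submodule ℂ (Vsl3 ρ σ) :=
  if d = (0, 0) then ⨆ a : ℤ × ℤ, ℂ ∙ (Kp ρ σ a.1 a.2 : Vsl3 ρ σ)
  else if d = (1, 0) then ⨆ a : ℤ × ℤ, ℂ ∙ ((Kp ρ σ a.1 a.2 : Vsl3 ρ σ) * vE₁ ρ σ)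
  else if d = (0, 1) then ⨆ a : ℤ × ℤ, ℂ ∙ ((Kp ρ σ a.1 a.2 : Vsl3 ρ σ) * vE₂ ρ σ)
  else (conjK₁ ρ σ).eigenspace (wt ρ σ d)

section weights

variable {ρ σ : ℂ}

lemma wtSub_zero : wtSub ρ σ (0, 0) = ⨆ a : ℤ × ℤ, ℂ ∙ (Kp ρ σ a.1 a.2 : Vsl3 ρ σ) := by
  simp [wtSub]

lemma wtSub_one :
    wtSub ρ σ (1, 0) = ⨆ a : ℤ × ℤ, ℂ ∙ ((Kp ρ σ a.1 a.2 : Vsl3 ρ σ) * vE₁ ρ σ) := by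
  simp [wtSub]

lemma wtSub_two :
    wtSub ρ σ (0, 1) = ⨆ a : ℤ × ℤ, ℂ ∙ ((Kp ρ σ a.1 a.2 : Vsl3 ρ σ) * vE₂ ρ σ) := by
  simp [wtSub]

lemma wtSub_of_ne {d : ℕ × ℕ} (h₀ : d ≠ (0, 0)) (h₁ : d ≠ (1, 0)) (h₂ : d ≠ (0, 1)) :
    wtSub ρ σ d = (conjK₁ ρ σ).eigenspace (wt ρ σ d) := by
  simp [wtSub, h₀, h₁, h₂]

lemma mem_eigenspace_conj {v : Vsl3 ρ σ} {μ : ℂ} :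
    v ∈ (conjK₁ ρ σ).eigenspace μ ↔ K₁ ρ σ * v = μ • (v * K₁ ρ σ) := by
  have R := vRelations_gen ρ σ
  rw [Module.End.mem_eigenspace_iff]
  simp only [conjK₁, LinearMap.comp_apply, LinearMap.mulLeft_apply, LinearMap.mulRight_apply]
  constructor
  · intro h
    have := congrArg (· * K₁ ρ σ) h
    simpa [mul_assoc, R.invk1] using this
  · intro h
    rw [← mul_assoc, h, smul_mul_assoc, mul_assoc, R.k1inv, mul_one]

lemma mul_mem_eigenspace {v w : Vsl3 ρ σ} {μ ν : ℂ} (hv : v ∈ (conjK₁ ρ σ).eigenspace μ)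
    (hw : w ∈ (conjK₁ ρ σ).eigenspace ν) : v * w ∈ (conjK₁ ρ σ).eigenspace (μ * ν) := by
  rw [mem_eigenspace_conj] at *
  rw [← mul_assoc, hv, smul_mul_assoc, mul_assoc, hw, mul_smul_comm, smul_smul, mul_assoc]

lemma Kp_mem_eigenspace (a b : ℤ) :
    (Kp ρ σ a b : Vsl3 ρ σ) ∈ (conjK₁ ρ σ).eigenspace 1 := by
  rw [mem_eigenspace_conj, one_smul, ← Kp_one_zero, ← Units.val_mul, ← Units.val_mul, Kp_mul,
    Kp_mul, add_comm, add_comm 0]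

lemma vE₁_mem_eigenspace (hρ : ρ ≠ 0) (hσ : σ ≠ 0) :
    vE₁ ρ σ ∈ (conjK₁ ρ σ).eigenspace (wt ρ σ (1, 0)) := by
  rw [mem_eigenspace_conj, ← Kp_one_zero, Kp_mul_vE₁ hρ hσ]
  simp [wt]

lemma vE₂_mem_eigenspace (hρ : ρ ≠ 0) (hσ : σ ≠ 0) :
    vE₂ ρ σ ∈ (conjK₁ ρ σ).eigenspace (wt ρ σ (0, 1)) := by
  rw [mem_eigenspace_conj, ← Kp_one_zero, Kp_mul_vE₂ hρ hσ]
  simp [wt]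

lemma wt_mul (hρ : ρ ≠ 0) (hσ : σ ≠ 0) (d e : ℕ × ℕ) :
    wt ρ σ d * wt ρ σ e = wt ρ σ (d + e) := by
  unfold wt
  rw [mon_mul hρ hσ]
  congr 1 <;> push_cast [Prod.fst_add, Prod.snd_add] <;> ring

lemma wtSub_le (hρ : ρ ≠ 0) (hσ : σ ≠ 0) (d : ℕ × ℕ) :
    wtSub ρ σ d ≤ (conjK₁ ρ σ).eigenspace (wt ρ σ d) := by
  by_cases h₀ : d = (0, 0)
  · subst h₀
    rw [wtSub_zero]
    refine iSup_le fun a => (Submodule.span_singleton_le_iff_mem _ _).mpr ?_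
    simpa [wt, mon] using Kp_mem_eigenspace (ρ := ρ) (σ := σ) a.1 a.2
  by_cases h₁ : d = (1, 0)
  · subst h₁
    rw [wtSub_one]
    refine iSup_le fun a => (Submodule.span_singleton_le_iff_mem _ _).mpr ?_
    simpa using mul_mem_eigenspace (Kp_mem_eigenspace a.1 a.2) (vE₁_mem_eigenspace hρ hσ)
  by_cases h₂ : d = (0, 1)
  · subst h₂
    rw [wtSub_two]
    refine iSup_le fun a => (Submodule.span_singleton_le_iff_mem _ _).mpr ?_
    simpa using mul_mem_eigenspace (Kp_mem_eigenspace a.1 a.2) (vE₂_mem_eigenspace hρ hσ)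
  rw [wtSub_of_ne h₀ h₁ h₂]

lemma Kp_mul_wtSub (a b : ℤ) (d : ℕ × ℕ) {v : Vsl3 ρ σ} (hv : v ∈ wtSub ρ σ d) :
    (Kp ρ σ a b : Vsl3 ρ σ) * v ∈ wtSub ρ σ d := by
  suffices h : wtSub ρ σ d ≤
      (wtSub ρ σ d).comap (LinearMap.mulLeft ℂ (Kp ρ σ a b : Vsl3 ρ σ)) from h hv
  by_cases h₀ : d = (0, 0)
  · subst h₀
    nth_rw 1 [wtSub_zero]
    refine iSup_le fun c => (Submodule.span_singleton_le_iff_mem _ _).mpr ?_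
    rw [Submodule.mem_comap, LinearMap.mulLeft_apply, ← Units.val_mul, Kp_mul, wtSub_zero]
    exact Submodule.mem_iSup_of_mem (a + c.1, b + c.2) (Submodule.mem_span_singleton_self _)
  by_cases h₁ : d = (1, 0)
  · subst h₁
    nth_rw 1 [wtSub_one]
    refine iSup_le fun c => (Submodule.span_singleton_le_iff_mem _ _).mpr ?_
    rw [Submodule.mem_comap, LinearMap.mulLeft_apply, ← mul_assoc, ← Units.val_mul, Kp_mul,
      wtSub_one]
    exact Submodule.mem_iSup_of_mem (a + c.1, b + c.2) (Submodule.mem_span_singleton_self _)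
  by_cases h₂ : d = (0, 1)
  · subst h₂
    nth_rw 1 [wtSub_two]
    refine iSup_le fun c => (Submodule.span_singleton_le_iff_mem _ _).mpr ?_
    rw [Submodule.mem_comap, LinearMap.mulLeft_apply, ← mul_assoc, ← Units.val_mul, Kp_mul,
      wtSub_two]
    exact Submodule.mem_iSup_of_mem (a + c.1, b + c.2) (Submodule.mem_span_singleton_self _)
  rw [wtSub_of_ne h₀ h₁ h₂]
  intro w hw
  simpa using mul_mem_eigenspace (Kp_mem_eigenspace a b) hw

lemma vE₁_mul_wtSub (hρ : ρ ≠ 0) (hσ : σ ≠ 0) (d : ℕ × ℕ) {v : Vsl3 ρ σ}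
    (hv : v ∈ wtSub ρ σ d) : vE₁ ρ σ * v ∈ wtSub ρ σ ((1, 0) + d) := by
  by_cases h₀ : d = (0, 0)
  · subst h₀
    suffices h : wtSub ρ σ (0, 0) ≤
      (wtSub ρ σ (1, 0)).comap (LinearMap.mulLeft ℂ (vE₁ ρ σ)) from h hv
    rw [wtSub_zero]
    refine iSup_le fun c => (Submodule.span_singleton_le_iff_mem _ _).mpr ?_
    rw [Submodule.mem_comap, LinearMap.mulLeft_apply, wtSub_one]
    refine Submodule.mem_iSup_of_mem c ?_
    rw [← Submodule.smul_mem_iff _ (mon_ne_zero hρ hσ (c.1 - c.2) (-2 * c.1 - c.2)),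
      ← Kp_mul_vE₁ hρ hσ]
    exact Submodule.mem_span_singleton_self _
  · have h₁ : (1, 0) + d ≠ (1, 0) := fun h => h₀ (add_eq_left.mp h)
    rw [wtSub_of_ne (by intro h; have := congrArg Prod.fst h; simp at this) h₁
      (by intro h; have := congrArg Prod.fst h; simp at this), ← wt_mul hρ hσ]
    exact mul_mem_eigenspace (vE₁_mem_eigenspace hρ hσ) (wtSub_le hρ hσ d hv)

lemma vE₂_mul_wtSub (hρ : ρ ≠ 0) (hσ : σ ≠ 0) (d : ℕ × ℕ) {v : Vsl3 ρ σ}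
    (hv : v ∈ wtSub ρ σ d) : vE₂ ρ σ * v ∈ wtSub ρ σ ((0, 1) + d) := by
  by_cases h₀ : d = (0, 0)
  · subst h₀
    suffices h : wtSub ρ σ (0, 0) ≤
      (wtSub ρ σ (0, 1)).comap (LinearMap.mulLeft ℂ (vE₂ ρ σ)) from h hv
    rw [wtSub_zero]
    refine iSup_le fun c => (Submodule.span_singleton_le_iff_mem _ _).mpr ?_
    rw [Submodule.mem_comap, LinearMap.mulLeft_apply, wtSub_two]
    refine Submodule.mem_iSup_of_mem c ?_
    rw [← Submodule.smul_mem_iff _ (mon_ne_zero hρ hσ (c.1 + 2 * c.2) (c.1 - c.2)),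
      ← Kp_mul_vE₂ hρ hσ]
    exact Submodule.mem_span_singleton_self _
  · have h₁ : (0, 1) + d ≠ (0, 1) := fun h => h₀ (add_eq_left.mp h)
    rw [wtSub_of_ne (by intro h; have := congrArg Prod.snd h; simp at this)
      (by intro h; have := congrArg Prod.snd h; simp at this) h₁, ← wt_mul hρ hσ]
    exact mul_mem_eigenspace (vE₂_mem_eigenspace hρ hσ) (wtSub_le hρ hσ d hv)

lemma iSup_wtSub (hρ : ρ ≠ 0) (hσ : σ ≠ 0) : ⨆ d, wtSub ρ σ d = ⊤ := by
  set M := ⨆ d, wtSub ρ σ d with hM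
  have hstep (x : Vsl3 ρ σ) (f : ℕ × ℕ → ℕ × ℕ)
      (hx : ∀ d, ∀ v ∈ wtSub ρ σ d, x * v ∈ wtSub ρ σ (f d)) : ∀ w ∈ M, x * w ∈ M := by
    suffices h : M ≤ M.comap (LinearMap.mulLeft ℂ x) from fun w hw => h hw
    exact iSup_le fun d v hv => Submodule.mem_iSup_of_mem (f d) (hx d v hv)
  have key : ∀ v : Vsl3 ρ σ, ∀ w ∈ M, v * w ∈ M := by
    intro v
    induction v using V_induction with
    | hc c =>
      intro w hw
      rw [← Algebra.smul_def]
      exact M.smul_mem c hw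
    | hadd a b ha hb =>
      intro w hw
      rw [add_mul]
      exact M.add_mem (ha w hw) (hb w hw)
    | hmul a b ha hb =>
      intro w hw
      rw [mul_assoc]
      exact ha _ (hb w hw)
    | h₁ => exact hstep _ _ fun d v hv => vE₁_mul_wtSub hρ hσ d hv
    | h₂ => exact hstep _ _ fun d v hv => vE₂_mul_wtSub hρ hσ d hv
    | h₃ => exact hstep _ id fun d v hv => Kp_one_zero (ρ := ρ) (σ := σ) ▸ Kp_mul_wtSub 1 0 d hv
    | h₄ =>
      exact hstep _ id fun d v hv =>
        Kp_neg_one_zero (ρ := ρ) (σ := σ) ▸ Kp_mul_wtSub (-1) 0 d hv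
    | h₅ => exact hstep _ id fun d v hv => Kp_zero_one (ρ := ρ) (σ := σ) ▸ Kp_mul_wtSub 0 1 d hv
    | h₆ =>
      exact hstep _ id fun d v hv =>
        Kp_zero_neg_one (ρ := ρ) (σ := σ) ▸ Kp_mul_wtSub 0 (-1) d hv
  have h1 : (1 : Vsl3 ρ σ) ∈ M := by
    refine Submodule.mem_iSup_of_mem (0, 0) ?_
    rw [wtSub_zero]
    refine Submodule.mem_iSup_of_mem (0, 0) ?_
    simp [Kp_zero, Submodule.mem_span_singleton_self]
  exact eq_top_iff.mpr fun v _ => by simpa using key v 1 h1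

/-- Every nonzero vector of `K₁`-weight `μ` lies in one of the subspaces `wtSub`. -/
lemma exists_mem_wtSub (hρ : ρ ≠ 0) (hσ : σ ≠ 0)
    (hind : ∀ m n : ℤ, (ρ ^ 3) ^ m * (σ ^ 3) ^ n = 1 → m = 0 ∧ n = 0) {v : Vsl3 ρ σ} {μ : ℂ}
    (h0 : v ≠ 0) (hv : K₁ ρ σ * v = μ • (v * K₁ ρ σ)) :
    ∃ d, wt ρ σ d = μ ∧ v ∈ wtSub ρ σ d := by
  refine eigen_mem (conjK₁ ρ σ) (wtSub ρ σ) (wt ρ σ) ?_ (wtSub_le hρ hσ) ?_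
    (mem_eigenspace_conj.mpr hv) h0
  · intro d e h
    obtain ⟨h1, h2⟩ := mon_inj hρ hσ hind h
    ext <;> omega
  · rw [iSup_wtSub hρ hσ]
    trivial

end weights

/-! ### Grouplike and skew-primitive elements -/

/-- The formulas that determine the comultiplication of `V`. -/
structure IsCoprod {ρ σ : ℂ} (Δ : Vsl3 ρ σ →ₐ[ℂ] Vsl3 ρ σ ⊗[ℂ] Vsl3 ρ σ) : Prop where
  e1 : Δ (vE₁ ρ σ) = vE₁ ρ σ ⊗ₜ[ℂ] 1 + (Kp ρ σ 2 (-1) : Vsl3 ρ σ) ⊗ₜ[ℂ] vE₁ ρ σ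
  e2 : Δ (vE₂ ρ σ) = vE₂ ρ σ ⊗ₜ[ℂ] 1 + (Kp ρ σ (-1) 2 : Vsl3 ρ σ) ⊗ₜ[ℂ] vE₂ ρ σ
  k1 : Δ (K₁ ρ σ) = K₁ ρ σ ⊗ₜ[ℂ] K₁ ρ σ
  k2 : Δ (K₂ ρ σ) = K₂ ρ σ ⊗ₜ[ℂ] K₂ ρ σ

/-- A character `χ` of `V` killing `E₁, E₂` and with `χ(K₁) = ρσ⁻¹`, `χ(K₂) = ρ`. It is chosen so
that `χ(K₁²K₂⁻¹)` and `χ(K₁⁻¹K₂²)` are the weights of `E₁` and `E₂` under conjugation by `K₁`. -/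
structure IsChar {ρ σ : ℂ} (χ : Vsl3 ρ σ →ₐ[ℂ] ℂ) : Prop where
  e1 : χ (vE₁ ρ σ) = 0
  e2 : χ (vE₂ ρ σ) = 0
  kp : ∀ a b : ℤ, χ (Kp ρ σ a b : Vsl3 ρ σ) = mon ρ σ (a + b) (-a)

lemma exists_isChar {ρ σ : ℂ} (hρ : ρ ≠ 0) (hσ : σ ≠ 0) :
    ∃ χ : Vsl3 ρ σ →ₐ[ℂ] ℂ, IsChar χ := by
  obtain ⟨χ, h₁, h₂, h₃, h₄⟩ := V_lift (ρ := ρ) (σ := σ) (B := ℂ)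
    (e₁ := 0) (e₂ := 0) (k₁ := mon ρ σ 1 (-1)) (k₁' := (mon ρ σ 1 (-1))⁻¹)
    (k₂ := mon ρ σ 1 0) (k₂' := (mon ρ σ 1 0)⁻¹)
    (by constructor <;> simp [mon_ne_zero hρ hσ, mul_comm])
  refine ⟨χ, h₁, h₂, fun a b => ?_⟩
  have e : χ (Kp ρ σ a b : Vsl3 ρ σ) = (Units.map (χ : Vsl3 ρ σ →* ℂ) (Kp ρ σ a b) : ℂˣ) := rfl
  have e1 : ((Units.map (χ : Vsl3 ρ σ →* ℂ) (uK₁ ρ σ) : ℂˣ) : ℂ) = mon ρ σ 1 (-1) := h₃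
  have e2 : ((Units.map (χ : Vsl3 ρ σ →* ℂ) (uK₂ ρ σ) : ℂˣ) : ℂ) = mon ρ σ 1 0 := h₄
  rw [e, Kp, map_mul, map_zpow, map_zpow, Units.val_mul, Units.val_zpow_eq_zpow_val,
    Units.val_zpow_eq_zpow_val, e1, e2, mon_zpow, mon_zpow, mon_mul hρ hσ]
  congr 1 <;> ring

section coprod

variable {ρ σ : ℂ}

lemma IsCoprod.kp {Δ : Vsl3 ρ σ →ₐ[ℂ] Vsl3 ρ σ ⊗[ℂ] Vsl3 ρ σ} (hΔ : IsCoprod Δ) (a b : ℤ) :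
    Δ (Kp ρ σ a b : Vsl3 ρ σ) = (Kp ρ σ a b : Vsl3 ρ σ) ⊗ₜ[ℂ] (Kp ρ σ a b : Vsl3 ρ σ) := by
  -- the grouplike units form a subgroup
  let G : Subgroup (Vsl3 ρ σ)ˣ :=
    { carrier := {u | Δ (u : Vsl3 ρ σ) = (u : Vsl3 ρ σ) ⊗ₜ[ℂ] (u : Vsl3 ρ σ)}
      mul_mem' := fun {u v} hu hv => by
        simp only [Set.mem_ofPred_eq] at *
        rw [Units.val_mul, map_mul, hu, hv, Algebra.TensorProduct.tmul_mul_tmul]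
      one_mem' := by simp [Algebra.TensorProduct.one_def]
      inv_mem' := fun {u} hu => by
        simp only [Set.mem_ofPred_eq] at *
        refine left_inv_eq_right_inv (a := Δ (u : Vsl3 ρ σ)) ?_ ?_
        · rw [← map_mul, Units.inv_mul, map_one]
        · rw [hu, Algebra.TensorProduct.tmul_mul_tmul, Units.mul_inv,
            Algebra.TensorProduct.one_def] }
  exact G.mul_mem (G.zpow_mem (show uK₁ ρ σ ∈ G from hΔ.k1) a)
    (G.zpow_mem (show uK₂ ρ σ ∈ G from hΔ.k2) b)

/-- Right translation `(id ⊗ χ) ∘ Δ` by the character `χ`. -/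
def rtr (Δ : Vsl3 ρ σ →ₐ[ℂ] Vsl3 ρ σ ⊗[ℂ] Vsl3 ρ σ) (χ : Vsl3 ρ σ →ₐ[ℂ] ℂ) :
    Vsl3 ρ σ →ₐ[ℂ] Vsl3 ρ σ :=
  (Algebra.TensorProduct.lift (AlgHom.id ℂ _) ((Algebra.ofId ℂ _).comp χ)
    fun x y => (Algebra.commutes (χ y) x).symm).comp Δ

/-- Left translation `(χ ⊗ id) ∘ Δ` by the character `χ`. -/
def ltr (Δ : Vsl3 ρ σ →ₐ[ℂ] Vsl3 ρ σ ⊗[ℂ] Vsl3 ρ σ) (χ : Vsl3 ρ σ →ₐ[ℂ] ℂ) :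
    Vsl3 ρ σ →ₐ[ℂ] Vsl3 ρ σ :=
  (Algebra.TensorProduct.lift ((Algebra.ofId ℂ _).comp χ) (AlgHom.id ℂ _)
    fun x y => Algebra.commutes (χ x) y).comp Δ

variable {Δ : Vsl3 ρ σ →ₐ[ℂ] Vsl3 ρ σ ⊗[ℂ] Vsl3 ρ σ} {χ : Vsl3 ρ σ →ₐ[ℂ] ℂ}

lemma rtr_grouplike {g : Vsl3 ρ σ} (hg : Δ g = g ⊗ₜ[ℂ] g) : rtr Δ χ g = χ g • g := by
  rw [rtr, AlgHom.comp_apply, hg]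
  refine (Algebra.TensorProduct.lift_tmul ..).trans ?_
  simp [Algebra.ofId_apply, Algebra.smul_def, Algebra.commutes]

lemma ltr_grouplike {g : Vsl3 ρ σ} (hg : Δ g = g ⊗ₜ[ℂ] g) : ltr Δ χ g = χ g • g := by
  rw [ltr, AlgHom.comp_apply, hg]
  refine (Algebra.TensorProduct.lift_tmul ..).trans ?_
  simp [Algebra.ofId_apply, Algebra.smul_def]

lemma rtr_skew {g x : Vsl3 ρ σ} (hx : Δ x = x ⊗ₜ[ℂ] 1 + g ⊗ₜ[ℂ] x) (h0 : χ x = 0) :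
    rtr Δ χ x = x := by
  rw [rtr, AlgHom.comp_apply, hx, map_add]
  refine (congrArg₂ (· + ·) (Algebra.TensorProduct.lift_tmul ..)
    (Algebra.TensorProduct.lift_tmul ..)).trans ?_
  simp [h0]

lemma ltr_skew {g x : Vsl3 ρ σ} (hx : Δ x = x ⊗ₜ[ℂ] 1 + g ⊗ₜ[ℂ] x) (h0 : χ x = 0) :
    ltr Δ χ x = χ g • x := by
  rw [ltr, AlgHom.comp_apply, hx, map_add]
  refine (congrArg₂ (· + ·) (Algebra.TensorProduct.lift_tmul ..)
    (Algebra.TensorProduct.lift_tmul ..)).trans ?_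
  simp [Algebra.ofId_apply, h0, Algebra.smul_def]

/-- Left and right translation by `χ` differ by conjugation by `K₁`. -/
lemma K₁_mul_rtr (hρ : ρ ≠ 0) (hσ : σ ≠ 0) (hΔ : IsCoprod Δ) (hχ : IsChar χ) (v : Vsl3 ρ σ) :
    K₁ ρ σ * rtr Δ χ v = ltr Δ χ v * K₁ ρ σ := by
  have hK (a b : ℤ) : K₁ ρ σ * rtr Δ χ (Kp ρ σ a b) = ltr Δ χ (Kp ρ σ a b) * K₁ ρ σ := by
    rw [rtr_grouplike (hΔ.kp a b), ltr_grouplike (hΔ.kp a b), mul_smul_comm, smul_mul_assoc]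
    congr 1
    simpa using mem_eigenspace_conj.mp (Kp_mem_eigenspace (ρ := ρ) (σ := σ) a b)
  induction v using V_induction with
  | hc c => simp [Algebra.commutes]
  | hadd a b ha hb => simp [mul_add, add_mul, ha, hb]
  | hmul a b ha hb => rw [map_mul, map_mul, ← mul_assoc, ha, mul_assoc, hb, mul_assoc]
  | h₁ =>
    rw [rtr_skew hΔ.e1 hχ.e1, ltr_skew hΔ.e1 hχ.e1, hχ.kp, smul_mul_assoc,
      mem_eigenspace_conj.mp (vE₁_mem_eigenspace hρ hσ)]
    norm_num [wt]
  | h₂ =>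
    rw [rtr_skew hΔ.e2 hχ.e2, ltr_skew hΔ.e2 hχ.e2, hχ.kp, smul_mul_assoc,
      mem_eigenspace_conj.mp (vE₂_mem_eigenspace hρ hσ)]
    norm_num [wt]
  | h₃ => exact Kp_one_zero (ρ := ρ) (σ := σ) ▸ hK 1 0
  | h₄ => exact Kp_neg_one_zero (ρ := ρ) (σ := σ) ▸ hK (-1) 0
  | h₅ => exact Kp_zero_one (ρ := ρ) (σ := σ) ▸ hK 0 1
  | h₆ => exact Kp_zero_neg_one (ρ := ρ) (σ := σ) ▸ hK 0 (-1)

/-- `χ` separates the torus monomials. -/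
lemma chi_inj (hρ : ρ ≠ 0) (hσ : σ ≠ 0)
    (hind : ∀ m n : ℤ, (ρ ^ 3) ^ m * (σ ^ 3) ^ n = 1 → m = 0 ∧ n = 0) :
    Function.Injective fun a : ℤ × ℤ => mon ρ σ (a.1 + a.2) (-a.1) := by
  intro a b h
  obtain ⟨h1, h2⟩ := mon_inj hρ hσ hind h
  ext <;> omega

lemma Kp_inj (hρ : ρ ≠ 0) (hσ : σ ≠ 0)
    (hind : ∀ m n : ℤ, (ρ ^ 3) ^ m * (σ ^ 3) ^ n = 1 → m = 0 ∧ n = 0) {a b c d : ℤ}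
    (h : Kp ρ σ a b = Kp ρ σ c d) : a = c ∧ b = d := by
  obtain ⟨χ, hχ⟩ := exists_isChar hρ hσ
  have h' := congrArg (fun u : (Vsl3 ρ σ)ˣ => χ (u : Vsl3 ρ σ)) h
  simp only [hχ.kp] at h'
  simpa using chi_inj hρ hσ hind (a₁ := (a, b)) (a₂ := (c, d)) h'

/-- A grouplike unit commutes with `K₁`, because it has the same left and right translates;
hence it lies in the span of the torus monomials, which are separated by right translation. -/
lemma grouplike_eq_Kp (hρ : ρ ≠ 0) (hσ : σ ≠ 0)
    (hind : ∀ m n : ℤ, (ρ ^ 3) ^ m * (σ ^ 3) ^ n = 1 → m = 0 ∧ n = 0)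
    (hΔ : IsCoprod Δ) (hχ : IsChar χ) (g : (Vsl3 ρ σ)ˣ)
    (hg : Δ (g : Vsl3 ρ σ) = (g : Vsl3 ρ σ) ⊗ₜ[ℂ] (g : Vsl3 ρ σ)) :
    ∃ a b : ℤ, g = Kp ρ σ a b := by
  have hχg : χ (g : Vsl3 ρ σ) ≠ 0 := (g.isUnit.map χ).ne_zero
  have hg0 : (g : Vsl3 ρ σ) ≠ 0 := fun h => hχg (by rw [h, map_zero])
  have hcomm : K₁ ρ σ * (g : Vsl3 ρ σ) = (1 : ℂ) • ((g : Vsl3 ρ σ) * K₁ ρ σ) := by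
    have := K₁_mul_rtr hρ hσ hΔ hχ (g : Vsl3 ρ σ)
    rw [rtr_grouplike hg, ltr_grouplike hg, mul_smul_comm, smul_mul_assoc] at this
    rw [one_smul]
    exact smul_right_injective _ hχg this
  obtain ⟨d, hd, hgd⟩ := exists_mem_wtSub hρ hσ hind hg0 hcomm
  have hd0 : d = (0, 0) := by
    have h1 : wt ρ σ d = mon ρ σ 0 0 := by simpa [mon] using hd
    obtain ⟨h1, h2⟩ := mon_inj hρ hσ hind h1
    ext <;> simp only <;> omega
  rw [hd0, wtSub_zero] at hgd
  obtain ⟨a, ha, hga⟩ := eigen_mem (rtr Δ χ).toLinearMap _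
    (fun a : ℤ × ℤ => mon ρ σ (a.1 + a.2) (-a.1)) (chi_inj hρ hσ hind)
    (fun a => (Submodule.span_singleton_le_iff_mem _ _).mpr <| by
      rw [Module.End.mem_eigenspace_iff, AlgHom.toLinearMap_apply,
        rtr_grouplike (hΔ.kp a.1 a.2), hχ.kp])
    hgd (ν := χ (g : Vsl3 ρ σ))
    (by rw [Module.End.mem_eigenspace_iff, AlgHom.toLinearMap_apply, rtr_grouplike hg]) hg0
  obtain ⟨c, hc⟩ := Submodule.mem_span_singleton.mp hga
  have hc1 : c = 1 := by
    have := congrArg χ hc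
    rw [map_smul, hχ.kp, smul_eq_mul, ← ha] at this
    exact mul_right_cancel₀ (mon_ne_zero hρ hσ _ _) (this.trans (one_mul _).symm)
  exact ⟨a.1, a.2, Units.ext (by rw [← hc, hc1, one_smul])⟩

/-- A skew-primitive element killed by `χ` is homogeneous of some degree `(p, q)`, and its
grouplike part is `(K₁²K₂⁻¹)^p (K₁⁻¹K₂²)^q`. -/
lemma skew_mem_wtSub (hρ : ρ ≠ 0) (hσ : σ ≠ 0)
    (hind : ∀ m n : ℤ, (ρ ^ 3) ^ m * (σ ^ 3) ^ n = 1 → m = 0 ∧ n = 0)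
    (hΔ : IsCoprod Δ) (hχ : IsChar χ) {a b : ℤ} {x : Vsl3 ρ σ} (h0 : x ≠ 0)
    (hx : Δ x = x ⊗ₜ[ℂ] 1 + (Kp ρ σ a b : Vsl3 ρ σ) ⊗ₜ[ℂ] x) (hχx : χ x = 0) :
    ∃ p q : ℕ, a = 2 * p - q ∧ b = 2 * q - p ∧ x ∈ wtSub ρ σ (p, q) := by
  have h := K₁_mul_rtr hρ hσ hΔ hχ x
  rw [rtr_skew hx hχx, ltr_skew hx hχx, smul_mul_assoc, hχ.kp] at h
  obtain ⟨⟨p, q⟩, hd, hxd⟩ := exists_mem_wtSub hρ hσ hind h0 h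
  obtain ⟨h1, h2⟩ := mon_inj hρ hσ hind hd
  simp only at h1 h2
  exact ⟨p, q, by omega, by omega, hxd⟩

/-- Right translation scales `K₁^a K₂^b e` by `χ(K₁^a K₂^b)`, which is `1` only for `a = b = 0`;
so `e` spans the invariant part of the torus multiples of `e`. -/
lemma eq_smul_of_mem_span (hρ : ρ ≠ 0) (hσ : σ ≠ 0)
    (hind : ∀ m n : ℤ, (ρ ^ 3) ^ m * (σ ^ 3) ^ n = 1 → m = 0 ∧ n = 0)
    (hΔ : IsCoprod Δ) (hχ : IsChar χ) {e x : Vsl3 ρ σ} (he : rtr Δ χ e = e)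
    (hx : rtr Δ χ x = x) (h0 : x ≠ 0)
    (hmem : x ∈ ⨆ a : ℤ × ℤ, ℂ ∙ ((Kp ρ σ a.1 a.2 : Vsl3 ρ σ) * e)) :
    ∃ c : ℂ, c ≠ 0 ∧ x = c • e := by
  obtain ⟨a, ha, hxa⟩ := eigen_mem (rtr Δ χ).toLinearMap _
    (fun a : ℤ × ℤ => mon ρ σ (a.1 + a.2) (-a.1)) (chi_inj hρ hσ hind)
    (fun a => (Submodule.span_singleton_le_iff_mem _ _).mpr <| by
      rw [Module.End.mem_eigenspace_iff, AlgHom.toLinearMap_apply, map_mul,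
        rtr_grouplike (hΔ.kp a.1 a.2), hχ.kp, he, smul_mul_assoc])
    hmem (ν := 1)
    (by rw [Module.End.mem_eigenspace_iff, AlgHom.toLinearMap_apply, hx, one_smul]) h0
  have ha0 : a = (0, 0) := chi_inj hρ hσ hind (by simpa [mon] using ha)
  obtain ⟨c, rfl⟩ := Submodule.mem_span_singleton.mp hxa
  refine ⟨c, ?_, by simp [ha0, Kp_zero]⟩
  rintro rfl
  simp at h0

end coprod

/-! ### Hopf automorphisms -/

/-- `θ` commutes with the comultiplication. -/
def IsHopf {ρ σ : ℂ} (Δ : Vsl3 ρ σ →ₐ[ℂ] Vsl3 ρ σ ⊗[ℂ] Vsl3 ρ σ)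
    (θ : Vsl3 ρ σ ≃ₐ[ℂ] Vsl3 ρ σ) : Prop :=
  (Algebra.TensorProduct.map θ.toAlgHom θ.toAlgHom).comp Δ = Δ.comp θ.toAlgHom

section hopf

variable {ρ σ : ℂ} {Δ : Vsl3 ρ σ →ₐ[ℂ] Vsl3 ρ σ ⊗[ℂ] Vsl3 ρ σ} {χ : Vsl3 ρ σ →ₐ[ℂ] ℂ}
  {θ : Vsl3 ρ σ ≃ₐ[ℂ] Vsl3 ρ σ}

lemma IsHopf.apply (h : IsHopf Δ θ) (v : Vsl3 ρ σ) :
    Δ (θ v) = Algebra.TensorProduct.map θ.toAlgHom θ.toAlgHom (Δ v) :=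
  (DFunLike.congr_fun h v).symm

lemma IsHopf.symm (h : IsHopf Δ θ) : IsHopf Δ θ.symm := by
  have hid : (Algebra.TensorProduct.map θ.symm.toAlgHom θ.symm.toAlgHom).comp
      (Algebra.TensorProduct.map θ.toAlgHom θ.toAlgHom) = AlgHom.id ℂ _ := by
    ext v <;> simp
  refine AlgHom.ext fun v => ?_
  have h1 := h.apply (θ.symm v)
  rw [AlgEquiv.apply_symm_apply] at h1
  rw [AlgHom.comp_apply, h1]
  exact DFunLike.congr_fun hid _

lemma IsHopf.skew (h : IsHopf Δ θ) {g x : Vsl3 ρ σ} (hx : Δ x = x ⊗ₜ[ℂ] 1 + g ⊗ₜ[ℂ] x) :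
    Δ (θ x) = θ x ⊗ₜ[ℂ] 1 + θ g ⊗ₜ[ℂ] θ x := by
  rw [h.apply, hx]
  simp

lemma IsHopf.exists_Kp (hρ : ρ ≠ 0) (hσ : σ ≠ 0)
    (hind : ∀ m n : ℤ, (ρ ^ 3) ^ m * (σ ^ 3) ^ n = 1 → m = 0 ∧ n = 0)
    (hΔ : IsCoprod Δ) (hχ : IsChar χ) (h : IsHopf Δ θ) (a b : ℤ) :
    ∃ c d : ℤ, Units.map (θ : Vsl3 ρ σ →* Vsl3 ρ σ) (Kp ρ σ a b) = Kp ρ σ c d := by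
  refine grouplike_eq_Kp hρ hσ hind hΔ hχ _ ?_
  change Δ (θ (Kp ρ σ a b : Vsl3 ρ σ)) = θ (Kp ρ σ a b : Vsl3 ρ σ) ⊗ₜ θ (Kp ρ σ a b : Vsl3 ρ σ)
  rw [h.apply, hΔ.kp]
  simp

/-- Every character kills a vector whose `K₁`-weight is not `1`. -/
lemma char_eq_zero (f : Vsl3 ρ σ →ₐ[ℂ] ℂ) {v : Vsl3 ρ σ} {μ : ℂ} (hμ : μ ≠ 1)
    (hv : v ∈ (conjK₁ ρ σ).eigenspace μ) : f v = 0 := by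
  have h := congrArg f (mem_eigenspace_conj.mp hv)
  have hk : f (K₁ ρ σ) ≠ 0 := ((uK₁ ρ σ).isUnit.map f).ne_zero
  rw [map_smul, map_mul, map_mul, smul_eq_mul] at h
  have h2 : (μ - 1) * (f v * f (K₁ ρ σ)) = 0 := by linear_combination -h
  rcases mul_eq_zero.mp h2 with h3 | h3
  · exact absurd (sub_eq_zero.mp h3) hμ
  · exact (mul_eq_zero.mp h3).resolve_right hk

lemma wt_ne_one (hρ : ρ ≠ 0) (hσ : σ ≠ 0)
    (hind : ∀ m n : ℤ, (ρ ^ 3) ^ m * (σ ^ 3) ^ n = 1 → m = 0 ∧ n = 0) {d : ℕ × ℕ}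
    (hd : d.1 + d.2 ≠ 0) : wt ρ σ d ≠ 1 := by
  intro h
  have h1 : wt ρ σ d = mon ρ σ 0 0 := by simpa [mon] using h
  obtain ⟨h1, h2⟩ := mon_inj hρ hσ hind h1
  omega

/-- A Hopf automorphism maps a skew-primitive `K₁`-weight vector `e` of nonzero degree (it is
applied to `E₁` and `E₂`) to a homogeneous element of some degree `(p, q)`, and its grouplike part to `(K₁²K₂⁻¹)^p (K₁⁻¹K₂²)^q`. -/
lemma IsHopf.skew_data (hρ : ρ ≠ 0) (hσ : σ ≠ 0)
    (hind : ∀ m n : ℤ, (ρ ^ 3) ^ m * (σ ^ 3) ^ n = 1 → m = 0 ∧ n = 0)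
    (hΔ : IsCoprod Δ) (hχ : IsChar χ) (h : IsHopf Δ θ) {e : Vsl3 ρ σ} {a b : ℤ} {d : ℕ × ℕ}
    (hd : d.1 + d.2 ≠ 0) (he0 : e ≠ 0) (hed : e ∈ (conjK₁ ρ σ).eigenspace (wt ρ σ d))
    (he : Δ e = e ⊗ₜ[ℂ] 1 + (Kp ρ σ a b : Vsl3 ρ σ) ⊗ₜ[ℂ] e) :
    ∃ p q : ℕ, Units.map (θ : Vsl3 ρ σ →* Vsl3 ρ σ) (Kp ρ σ a b) =
        Kp ρ σ (2 * p - q) (2 * q - p) ∧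
      θ e ∈ wtSub ρ σ (p, q) ∧ rtr Δ χ (θ e) = θ e := by
  obtain ⟨a', b', hab⟩ := h.exists_Kp hρ hσ hind hΔ hχ a b
  have hθe := h.skew he
  have hab' : θ (Kp ρ σ a b : Vsl3 ρ σ) = (Kp ρ σ a' b' : Vsl3 ρ σ) := congrArg Units.val hab
  have h0 : χ (θ e) = 0 := char_eq_zero (χ.comp θ.toAlgHom) (wt_ne_one hρ hσ hind hd) hed
  have hr := rtr_skew (χ := χ) hθe h0
  rw [hab'] at hθe
  obtain ⟨p, q, rfl, rfl, hm⟩ := skew_mem_wtSub hρ hσ hind hΔ hχ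
    (by simpa using he0) hθe h0
  exact ⟨p, q, hab, hm, hr⟩

/-- Mutually inverse `2 × 2` matrices of natural numbers are permutation matrices. -/
lemma nat_matrix {p q p' q' P Q P' Q' : ℕ} (h₁ : p * P + q * P' = 1) (h₂ : p * Q + q * Q' = 0)
    (h₃ : p' * P + q' * P' = 0) (h₄ : p' * Q + q' * Q' = 1) :
    (p = 1 ∧ q = 0 ∧ p' = 0 ∧ q' = 1) ∨ (p = 0 ∧ q = 1 ∧ p' = 1 ∧ q' = 0) := by
  rcases Nat.add_eq_one_iff.mp h₁ with ⟨h5, h6⟩ | ⟨h5, h6⟩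
  · obtain ⟨rfl, rfl⟩ := mul_eq_one.mp h6
    simp_all
  · obtain ⟨rfl, rfl⟩ := mul_eq_one.mp h5
    simp_all

lemma map_Kp {Φ : (Vsl3 ρ σ)ˣ →* (Vsl3 ρ σ)ˣ} {P Q P' Q' : ℕ}
    (h₁ : Φ (Kp ρ σ 2 (-1)) = Kp ρ σ (2 * P - Q) (2 * Q - P))
    (h₂ : Φ (Kp ρ σ (-1) 2) = Kp ρ σ (2 * P' - Q') (2 * Q' - P')) (p q : ℕ) :
    Φ (Kp ρ σ (2 * p - q) (2 * q - p)) =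
      Kp ρ σ (p * (2 * P - Q) + q * (2 * P' - Q')) (p * (2 * Q - P) + q * (2 * Q' - P')) := by
  have : Kp ρ σ (2 * p - q) (2 * q - p) = Kp ρ σ 2 (-1) ^ p * Kp ρ σ (-1) 2 ^ q := by
    rw [Kp_pow, Kp_pow, Kp_mul]
    congr 1 <;> ring
  rw [this, map_mul, map_pow, map_pow, h₁, h₂, Kp_pow, Kp_pow, Kp_mul]

lemma IsHopf.images (hρ : ρ ≠ 0) (hσ : σ ≠ 0)
    (hind : ∀ m n : ℤ, (ρ ^ 3) ^ m * (σ ^ 3) ^ n = 1 → m = 0 ∧ n = 0)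
    (hΔ : IsCoprod Δ) (h : IsHopf Δ θ) :
    θ (K₁ ρ σ) = K₁ ρ σ ∧ θ (K₂ ρ σ) = K₂ ρ σ ∧
      ∃ b₁ b₂ : ℂ, b₁ ≠ 0 ∧ b₂ ≠ 0 ∧
        θ (vE₁ ρ σ) = b₁ • vE₁ ρ σ ∧ θ (vE₂ ρ σ) = b₂ • vE₂ ρ σ := by
  obtain ⟨χ, hχ⟩ := exists_isChar hρ hσ
  have hE₁ := vE₁_ne_zero hρ hσ
  have hE₂ := vE₂_ne_zero hρ hσ
  obtain ⟨p, q, hω₁, hx, hrx⟩ := h.skew_data hρ hσ hind hΔ hχ (d := (1, 0)) (by simp)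
    hE₁ (vE₁_mem_eigenspace hρ hσ) hΔ.e1
  obtain ⟨p', q', hω₂, hy, hry⟩ := h.skew_data hρ hσ hind hΔ hχ (d := (0, 1)) (by simp)
    hE₂ (vE₂_mem_eigenspace hρ hσ) hΔ.e2
  obtain ⟨P, Q, hω₁', -, -⟩ := h.symm.skew_data hρ hσ hind hΔ hχ (d := (1, 0)) (by simp)
    hE₁ (vE₁_mem_eigenspace hρ hσ) hΔ.e1
  obtain ⟨P', Q', hω₂', -, -⟩ := h.symm.skew_data hρ hσ hind hΔ hχ (d := (0, 1)) (by simp)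
    hE₂ (vE₂_mem_eigenspace hρ hσ) hΔ.e2
  have hinv (u : (Vsl3 ρ σ)ˣ) : Units.map (θ.symm : Vsl3 ρ σ →* Vsl3 ρ σ)
      (Units.map (θ : Vsl3 ρ σ →* Vsl3 ρ σ) u) = u :=
    Units.ext (θ.symm_apply_apply u)
  have hx0 : θ (vE₁ ρ σ) ≠ 0 := by simpa using hE₁
  have hy0 : θ (vE₂ ρ σ) ≠ 0 := by simpa using hE₂
  have hr₁ := rtr_skew (χ := χ) hΔ.e1 hχ.e1
  have hr₂ := rtr_skew (χ := χ) hΔ.e2 hχ.e2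
  -- `θ` and its inverse act on the exponents of the grouplike parts by natural matrices
  have hperm : (p = 1 ∧ q = 0 ∧ p' = 0 ∧ q' = 1) ∨ (p = 0 ∧ q = 1 ∧ p' = 1 ∧ q' = 0) := by
    have e1 := hinv (Kp ρ σ 2 (-1))
    rw [hω₁, map_Kp hω₁' hω₂'] at e1
    have e2 := hinv (Kp ρ σ (-1) 2)
    rw [hω₂, map_Kp hω₁' hω₂'] at e2
    obtain ⟨f1, f2⟩ := Kp_inj hρ hσ hind e1
    obtain ⟨f3, f4⟩ := Kp_inj hρ hσ hind e2
    apply nat_matrix (P := P) (Q := Q) (P' := P') (Q' := Q') <;> zify <;> linarith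
  rcases hperm with ⟨rfl, rfl, rfl, rfl⟩ | ⟨rfl, rfl, rfl, rfl⟩
  · rw [wtSub_one] at hx
    rw [wtSub_two] at hy
    obtain ⟨b₁, hb₁, hx⟩ := eq_smul_of_mem_span hρ hσ hind hΔ hχ hr₁ hrx hx0 hx
    obtain ⟨b₂, hb₂, hy⟩ := eq_smul_of_mem_span hρ hσ hind hΔ hχ hr₂ hry hy0 hy
    -- the fixed elements `K₁²K₂⁻¹` and `K₁⁻¹K₂²` generate a subgroup of index 3 of the torus
    have h3 (a b : ℤ) : Units.map (θ : Vsl3 ρ σ →* Vsl3 ρ σ) (Kp ρ σ a b) = Kp ρ σ a b := by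
      obtain ⟨c, d, hcd⟩ := h.exists_Kp hρ hσ hind hΔ hχ a b
      have e0 : Kp ρ σ a b ^ 3 = Kp ρ σ 2 (-1) ^ (2 * a + b) * Kp ρ σ (-1) 2 ^ (a + 2 * b) := by
        rw [Kp_pow, Kp_zpow, Kp_zpow, Kp_mul]
        congr 1 <;> push_cast <;> ring
      have e1 : Kp ρ σ c d ^ 3 = Kp ρ σ a b ^ 3 := by
        rw [← hcd, ← map_pow, e0, map_mul, map_zpow, map_zpow, hω₁, hω₂]
        norm_num
      rw [Kp_pow, Kp_pow] at e1
      obtain ⟨f1, f2⟩ := Kp_inj hρ hσ hind e1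
      push_cast at f1 f2
      rw [hcd, show c = a by omega, show d = b by omega]
    refine ⟨?_, ?_, b₁, b₂, hb₁, hb₂, hx, hy⟩
    · simpa [← Kp_one_zero] using congrArg Units.val (h3 1 0)
    · simpa [← Kp_zero_one] using congrArg Units.val (h3 0 1)
  · exfalso
    rw [wtSub_one] at hy
    obtain ⟨b₂, hb₂, hy⟩ := eq_smul_of_mem_span hρ hσ hind hΔ hχ hr₁ hry hy0 hy
    -- if `θ` swaps `E₁` and `E₂`, then the relation between `K₁²K₂⁻¹` and `E₂`, of weight
    -- `s`, is carried to the one between `K₁⁻¹K₂²` and `E₁`, of weight `r⁻¹`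
    have hω : θ (Kp ρ σ 2 (-1) : Vsl3 ρ σ) = (Kp ρ σ (-1) 2 : Vsl3 ρ σ) := by
      simpa using congrArg Units.val hω₁
    have e1 := congrArg θ (Kp_mul_vE₂ hρ hσ 2 (-1))
    rw [map_smul, map_mul, map_mul, hω, hy, mul_smul_comm, smul_mul_assoc,
      Kp_mul_vE₁ hρ hσ, smul_comm] at e1
    have hne : b₂ • (vE₁ ρ σ * (Kp ρ σ (-1) 2 : Vsl3 ρ σ)) ≠ 0 :=
      smul_ne_zero hb₂ (by rwa [Ne, Units.mul_left_eq_zero])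
    have e2 := smul_left_injective ℂ hne e1
    have e3 := mon_inj hρ hσ hind e2
    omega

lemma isHopf_of_images (hΔ : IsCoprod Δ) {b₁ b₂ : ℂ} (h₁ : θ (K₁ ρ σ) = K₁ ρ σ)
    (h₂ : θ (K₂ ρ σ) = K₂ ρ σ) (h₃ : θ (vE₁ ρ σ) = b₁ • vE₁ ρ σ)
    (h₄ : θ (vE₂ ρ σ) = b₂ • vE₂ ρ σ) : IsHopf Δ θ := by
  have hfix (a b : ℤ) : θ (Kp ρ σ a b : Vsl3 ρ σ) = (Kp ρ σ a b : Vsl3 ρ σ) := by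
    have e1 : Units.map (θ : Vsl3 ρ σ →* Vsl3 ρ σ) (uK₁ ρ σ) = uK₁ ρ σ := Units.ext h₁
    have e2 : Units.map (θ : Vsl3 ρ σ →* Vsl3 ρ σ) (uK₂ ρ σ) = uK₂ ρ σ := Units.ext h₂
    have e3 : Units.map (θ : Vsl3 ρ σ →* Vsl3 ρ σ) (Kp ρ σ a b) = Kp ρ σ a b := by
      rw [Kp, map_mul, map_zpow, map_zpow, e1, e2]
    exact congrArg Units.val e3
  unfold IsHopf
  refine V_hom_ext (B := Vsl3 ρ σ ⊗[ℂ] Vsl3 ρ σ) ?_ ?_ ?_ ?_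
  · simp [hΔ.e1, h₃, hfix, TensorProduct.smul_tmul']
  · simp [hΔ.e2, h₄, hfix, TensorProduct.smul_tmul']
  · simp [hΔ.k1, h₁]
  · simp [hΔ.k2, h₂]

end hopf

/-! ### The torus of diagonal automorphisms -/

lemma exists_scale (ρ σ : ℂ) (b : ℂˣ × ℂˣ) : ∃ f : Vsl3 ρ σ →ₐ[ℂ] Vsl3 ρ σ,
    f (vE₁ ρ σ) = (b.1 : ℂ) • vE₁ ρ σ ∧ f (vE₂ ρ σ) = (b.2 : ℂ) • vE₂ ρ σ ∧
      f (K₁ ρ σ) = K₁ ρ σ ∧ f (K₂ ρ σ) = K₂ ρ σ := by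
  have R := vRelations_gen ρ σ
  refine V_lift (k₁' := K₁inv ρ σ) (k₂' := K₂inv ρ σ)
    ⟨R.k1inv, R.invk1, R.k2inv, R.invk2, R.k1k2, ?_, ?_, ?_, ?_, ?_, ?_⟩
  · rw [mul_smul_comm, R.k1e1, smul_mul_assoc, smul_comm]
  · rw [mul_smul_comm, R.k1e2, smul_mul_assoc, smul_comm]
  · rw [mul_smul_comm, R.k2e1, smul_mul_assoc, smul_comm]
  · rw [mul_smul_comm, R.k2e2, smul_mul_assoc, smul_comm]
  · have h := congrArg (fun v => ((b.1 : ℂ) * b.1 * b.2) • v) R.serre1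
    simp only [smul_zero] at h
    rw [← h]
    simp only [smul_mul_assoc, mul_smul_comm, smul_smul, smul_add, smul_sub]
    module
  · have h := congrArg (fun v => ((b.1 : ℂ) * b.2 * b.2) • v) R.serre2
    simp only [smul_zero] at h
    rw [← h]
    simp only [smul_mul_assoc, mul_smul_comm, smul_smul, smul_add, smul_sub]
    module

/-- The algebra endomorphism fixing `K₁, K₂` and scaling `E₁, E₂` by `b₁, b₂`. -/
def scale (ρ σ : ℂ) (b : ℂˣ × ℂˣ) : Vsl3 ρ σ →ₐ[ℂ] Vsl3 ρ σ := (exists_scale ρ σ b).choose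

lemma scale_spec (ρ σ : ℂ) (b : ℂˣ × ℂˣ) :
    scale ρ σ b (vE₁ ρ σ) = (b.1 : ℂ) • vE₁ ρ σ ∧ scale ρ σ b (vE₂ ρ σ) = (b.2 : ℂ) • vE₂ ρ σ ∧
      scale ρ σ b (K₁ ρ σ) = K₁ ρ σ ∧ scale ρ σ b (K₂ ρ σ) = K₂ ρ σ :=
  (exists_scale ρ σ b).choose_spec

lemma scale_comp (ρ σ : ℂ) (b c : ℂˣ × ℂˣ) :
    (scale ρ σ b).comp (scale ρ σ c) = scale ρ σ (b * c) := by
  obtain ⟨h₁, h₂, h₃, h₄⟩ := scale_spec ρ σ b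
  obtain ⟨g₁, g₂, g₃, g₄⟩ := scale_spec ρ σ c
  obtain ⟨k₁, k₂, k₃, k₄⟩ := scale_spec ρ σ (b * c)
  refine V_hom_ext ?_ ?_ ?_ ?_
  · rw [AlgHom.comp_apply, g₁, map_smul, h₁, k₁, smul_smul, Prod.fst_mul, Units.val_mul, mul_comm]
  · rw [AlgHom.comp_apply, g₂, map_smul, h₂, k₂, smul_smul, Prod.snd_mul, Units.val_mul, mul_comm]
  · rw [AlgHom.comp_apply, g₃, h₃, k₃]
  · rw [AlgHom.comp_apply, g₄, h₄, k₄]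

lemma scale_one (ρ σ : ℂ) : scale ρ σ 1 = AlgHom.id ℂ _ := by
  obtain ⟨h₁, h₂, h₃, h₄⟩ := scale_spec ρ σ 1
  refine V_hom_ext ?_ ?_ ?_ ?_
  · simp [h₁]
  · simp [h₂]
  · simp [h₃]
  · simp [h₄]

/-- The action of `(ℂ*)²` on `V` by scaling `E₁` and `E₂`. -/
def scaleHom (ρ σ : ℂ) : ℂˣ × ℂˣ →* (Vsl3 ρ σ ≃ₐ[ℂ] Vsl3 ρ σ) where
  toFun b := AlgEquiv.ofAlgHom (scale ρ σ b) (scale ρ σ b⁻¹)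
    (by rw [scale_comp, mul_inv_cancel, scale_one]) (by rw [scale_comp, inv_mul_cancel, scale_one])
  map_one' := AlgEquiv.ext fun v => DFunLike.congr_fun (scale_one ρ σ) v
  map_mul' b c := AlgEquiv.ext fun v => (DFunLike.congr_fun (scale_comp ρ σ b c) v).symm

lemma scaleHom_apply (ρ σ : ℂ) (b : ℂˣ × ℂˣ) (v : Vsl3 ρ σ) :
    scaleHom ρ σ b v = scale ρ σ b v := rfl

lemma scaleHom_injective {ρ σ : ℂ} (hρ : ρ ≠ 0) (hσ : σ ≠ 0) :
    Function.Injective (scaleHom ρ σ) := by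
  intro b c h
  have e1 := DFunLike.congr_fun h (vE₁ ρ σ)
  have e2 := DFunLike.congr_fun h (vE₂ ρ σ)
  rw [scaleHom_apply, scaleHom_apply, (scale_spec ρ σ b).1, (scale_spec ρ σ c).1] at e1
  rw [scaleHom_apply, scaleHom_apply, (scale_spec ρ σ b).2.1, (scale_spec ρ σ c).2.1] at e2
  exact Prod.ext (Units.ext (smul_left_injective ℂ (vE₁_ne_zero hρ hσ) e1))
    (Units.ext (smul_left_injective ℂ (vE₂_ne_zero hρ hσ) e2))

lemma mem_range_scaleHom {ρ σ : ℂ} (θ : Vsl3 ρ σ ≃ₐ[ℂ] Vsl3 ρ σ) :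
    θ ∈ (scaleHom ρ σ).range ↔ θ (K₁ ρ σ) = K₁ ρ σ ∧ θ (K₂ ρ σ) = K₂ ρ σ ∧
      ∃ b₁ b₂ : ℂ, b₁ ≠ 0 ∧ b₂ ≠ 0 ∧
        θ (vE₁ ρ σ) = b₁ • vE₁ ρ σ ∧ θ (vE₂ ρ σ) = b₂ • vE₂ ρ σ := by
  constructor
  · rintro ⟨b, rfl⟩
    obtain ⟨h₁, h₂, h₃, h₄⟩ := scale_spec ρ σ b
    exact ⟨h₃, h₄, b.1, b.2, b.1.ne_zero, b.2.ne_zero, h₁, h₂⟩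
  · rintro ⟨h₃, h₄, b₁, b₂, hb₁, hb₂, h₁, h₂⟩
    obtain ⟨g₁, g₂, g₃, g₄⟩ := scale_spec ρ σ (Units.mk0 b₁ hb₁, Units.mk0 b₂ hb₂)
    refine ⟨(Units.mk0 b₁ hb₁, Units.mk0 b₂ hb₂), ?_⟩
    have : scale ρ σ (Units.mk0 b₁ hb₁, Units.mk0 b₂ hb₂) = θ.toAlgHom :=
      V_hom_ext (g₁.trans h₁.symm) (g₂.trans h₂.symm) (g₃.trans h₃.symm) (g₄.trans h₄.symm)
    exact AlgEquiv.ext fun v => DFunLike.congr_fun this v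


/-- a `ℂ`-algebra automorphism `θ` of `Ǔ^{≥0}_{r,s}(sl₃)` satisfies
`(θ ⊗ θ) ∘ Δ = Δ ∘ θ` (i.e. is a Hopf algebra automorphism) iff `θ(K₁) = K₁`,
`θ(K₂) = K₂`, `θ(E₁) = b₁E₁` and `θ(E₂) = b₂E₂` for some `b₁, b₂ ∈ ℂ*`; consequently the
group of Hopf algebra automorphisms of `Ǔ^{≥0}_{r,s}(sl₃)` is isomorphic to `(ℂ*)²`. -/
theorem stmt11 (ρ σ : ℂ) (hρ : ρ ≠ 0) (hσ : σ ≠ 0)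
    (hind : ∀ m n : ℤ, (ρ ^ 3) ^ m * (σ ^ 3) ^ n = 1 → m = 0 ∧ n = 0)
    (Δ : Vsl3 ρ σ →ₐ[ℂ] Vsl3 ρ σ ⊗[ℂ] Vsl3 ρ σ)
    (hΔE₁ : Δ (vE₁ ρ σ) = vE₁ ρ σ ⊗ₜ[ℂ] 1 + (K₁ ρ σ ^ 2 * K₂inv ρ σ) ⊗ₜ[ℂ] vE₁ ρ σ)
    (hΔE₂ : Δ (vE₂ ρ σ) = vE₂ ρ σ ⊗ₜ[ℂ] 1 + (K₁inv ρ σ * K₂ ρ σ ^ 2) ⊗ₜ[ℂ] vE₂ ρ σ)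
    (hΔK₁ : Δ (K₁ ρ σ) = K₁ ρ σ ⊗ₜ[ℂ] K₁ ρ σ)
    (hΔK₁' : Δ (K₁inv ρ σ) = K₁inv ρ σ ⊗ₜ[ℂ] K₁inv ρ σ)
    (hΔK₂ : Δ (K₂ ρ σ) = K₂ ρ σ ⊗ₜ[ℂ] K₂ ρ σ)
    (hΔK₂' : Δ (K₂inv ρ σ) = K₂inv ρ σ ⊗ₜ[ℂ] K₂inv ρ σ) :
    (∀ θ : Vsl3 ρ σ ≃ₐ[ℂ] Vsl3 ρ σ,
      (Algebra.TensorProduct.map θ.toAlgHom θ.toAlgHom).comp Δ = Δ.comp θ.toAlgHom ↔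
        θ (K₁ ρ σ) = K₁ ρ σ ∧ θ (K₂ ρ σ) = K₂ ρ σ ∧
          ∃ b₁ b₂ : ℂ, b₁ ≠ 0 ∧ b₂ ≠ 0 ∧
            θ (vE₁ ρ σ) = b₁ • vE₁ ρ σ ∧ θ (vE₂ ρ σ) = b₂ • vE₂ ρ σ) ∧
    ∃ G : Subgroup (Vsl3 ρ σ ≃ₐ[ℂ] Vsl3 ρ σ),
      (∀ θ : Vsl3 ρ σ ≃ₐ[ℂ] Vsl3 ρ σ,
        θ ∈ G ↔ (Algebra.TensorProduct.map θ.toAlgHom θ.toAlgHom).comp Δ = Δ.comp θ.toAlgHom) ∧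
      Nonempty (G ≃* ℂˣ × ℂˣ) := by
  have hΔ : IsCoprod Δ := ⟨omega₁_eq (ρ := ρ) (σ := σ) ▸ hΔE₁,
    omega₂_eq (ρ := ρ) (σ := σ) ▸ hΔE₂, hΔK₁, hΔK₂⟩
  have key (θ : Vsl3 ρ σ ≃ₐ[ℂ] Vsl3 ρ σ) :
      (Algebra.TensorProduct.map θ.toAlgHom θ.toAlgHom).comp Δ = Δ.comp θ.toAlgHom ↔
        θ (K₁ ρ σ) = K₁ ρ σ ∧ θ (K₂ ρ σ) = K₂ ρ σ ∧
          ∃ b₁ b₂ : ℂ, b₁ ≠ 0 ∧ b₂ ≠ 0 ∧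
            θ (vE₁ ρ σ) = b₁ • vE₁ ρ σ ∧ θ (vE₂ ρ σ) = b₂ • vE₂ ρ σ :=
    ⟨fun h => IsHopf.images hρ hσ hind hΔ h,
      fun ⟨h₁, h₂, _, _, _, _, h₃, h₄⟩ => isHopf_of_images hΔ h₁ h₂ h₃ h₄⟩
  exact ⟨key, (scaleHom ρ σ).range, fun θ => (mem_range_scaleHom θ).trans (key θ).symm,
    ⟨(MonoidHom.ofInjective (scaleHom_injective hρ hσ)).symm⟩⟩
end
end

section
/- There is a unique ℂ-algebra homomorphism I : U → Q_3 with I(E_1) = T_1 and I(E_2) = T_2 + (r − s)^{-1} T_3 T_1^{-1} (the two quantum Serre relations are mapped to 0), it satisfies I(E_3) = T_3 where E_3 = E_1E_2 − sE_2E_1, and I is injective. -/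
/-!
Write `E₃ = E₁E₂ - sE₂E₁`. The two quantum Serre relations say exactly `E₁E₃ = rE₃E₁` and
`E₃E₂ = rE₂E₃`. The proposed images satisfy the analogous identities in the quantum torus, where
`T₁T₃T₁⁻¹ = rT₃` turns `E₃` into `T₃`; this gives existence of `I`, and uniqueness holds because
`E₁, E₂` generate.

For injectivity, the commutation rules show that the ordered monomials `E₂ᵃE₃ᵇE₁ᶜ` span `U`
(`monomial_span`). The quantum torus acts on functions on `ℤ³` by weighted shifts (`torusRep`),
which is its left regular representation in the basis `T₂ⁱT₃ʲT₁ᵏ`. Applied to the delta function at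
the origin, the image `(T₂ + (r-s)⁻¹T₃T₁⁻¹)ᵃT₃ᵇT₁ᶜ` of a monomial gives the delta function at
`(a, b, c)` plus terms with smaller first coordinate (`monomialVec_apply`). These vectors are
therefore linearly independent (`eq_zero_of_triangular`), so `I` kills no nonzero combination of the
monomials.
-/

noncomputable section

open FreeAlgebra

/-- The two quantum Serre relations defining `U⁺_{r,s}(sl₃)` as a quotient of the
free algebra on two generators (generator `0` is `E₁`, generator `1` is `E₂`). -/
inductive URel (r s : ℂ) : FreeAlgebra ℂ (Fin 2) → FreeAlgebra ℂ (Fin 2) → Prop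
  | serre1 : URel r s
      (ι ℂ (0 : Fin 2) * ι ℂ 0 * ι ℂ 1 - (r + s) • (ι ℂ (0 : Fin 2) * ι ℂ 1 * ι ℂ 0)
        + (r * s) • (ι ℂ (1 : Fin 2) * ι ℂ 0 * ι ℂ 0)) 0
  | serre2 : URel r s
      (ι ℂ (0 : Fin 2) * ι ℂ 1 * ι ℂ 1 - (r + s) • (ι ℂ (1 : Fin 2) * ι ℂ 0 * ι ℂ 1)
        + (r * s) • (ι ℂ (1 : Fin 2) * ι ℂ 1 * ι ℂ 0)) 0

/-- `U⁺_{r,s}(sl₃)`: quotient of the free algebra by the two-sided ideal generated by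
the two quantum Serre relations. -/
abbrev Usl3 (r s : ℂ) := RingQuot (URel r s)

def E₁ (r s : ℂ) : Usl3 r s := RingQuot.mkAlgHom ℂ (URel r s) (ι ℂ 0)

def E₂ (r s : ℂ) : Usl3 r s := RingQuot.mkAlgHom ℂ (URel r s) (ι ℂ 1)

def E₃ (r s : ℂ) : Usl3 r s := E₁ r s * E₂ r s - s • (E₂ r s * E₁ r s)

/-- The defining relations of the quantum torus `ℂ_{r,s}[T₁^{±1}, T₂^{±1}, T₃^{±1}]` as a
quotient of the free algebra on six generators: generator `0` is `T₁`, `1` is `T₁⁻¹`,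
`2` is `T₂`, `3` is `T₂⁻¹`, `4` is `T₃`, `5` is `T₃⁻¹`. -/
inductive QRel (r s : ℂ) : FreeAlgebra ℂ (Fin 6) → FreeAlgebra ℂ (Fin 6) → Prop
  | t1inv : QRel r s (ι ℂ (0 : Fin 6) * ι ℂ 1) 1
  | invt1 : QRel r s (ι ℂ (1 : Fin 6) * ι ℂ 0) 1
  | t2inv : QRel r s (ι ℂ (2 : Fin 6) * ι ℂ 3) 1
  | invt2 : QRel r s (ι ℂ (3 : Fin 6) * ι ℂ 2) 1
  | t3inv : QRel r s (ι ℂ (4 : Fin 6) * ι ℂ 5) 1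
  | invt3 : QRel r s (ι ℂ (5 : Fin 6) * ι ℂ 4) 1
  | t1t2 : QRel r s (ι ℂ (0 : Fin 6) * ι ℂ 2) (s • (ι ℂ (2 : Fin 6) * ι ℂ 0))
  | t1t3 : QRel r s (ι ℂ (0 : Fin 6) * ι ℂ 4) (r • (ι ℂ (4 : Fin 6) * ι ℂ 0))
  | t2t3 : QRel r s (ι ℂ (2 : Fin 6) * ι ℂ 4) (r⁻¹ • (ι ℂ (4 : Fin 6) * ι ℂ 2))

/-- The quantum torus `Q₃ = ℂ_{r,s}[T₁^{±1}, T₂^{±1}, T₃^{±1}]`. -/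
abbrev QT3 (r s : ℂ) := RingQuot (QRel r s)

def T₁ (r s : ℂ) : QT3 r s := RingQuot.mkAlgHom ℂ (QRel r s) (ι ℂ 0)
def T₁inv (r s : ℂ) : QT3 r s := RingQuot.mkAlgHom ℂ (QRel r s) (ι ℂ 1)
def T₂ (r s : ℂ) : QT3 r s := RingQuot.mkAlgHom ℂ (QRel r s) (ι ℂ 2)
def T₂inv (r s : ℂ) : QT3 r s := RingQuot.mkAlgHom ℂ (QRel r s) (ι ℂ 3)
def T₃ (r s : ℂ) : QT3 r s := RingQuot.mkAlgHom ℂ (QRel r s) (ι ℂ 4)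
def T₃inv (r s : ℂ) : QT3 r s := RingQuot.mkAlgHom ℂ (QRel r s) (ι ℂ 5)

/-! ### Commutation rules and spanning monomials in `U` -/

lemma E₁_mul_E₃ (r s : ℂ) : E₁ r s * E₃ r s = r • (E₃ r s * E₁ r s) := by
  have h := RingQuot.mkAlgHom_rel ℂ (URel.serre1 (r := r) (s := s))
  simp only [map_add, map_sub, map_smul, map_mul, map_zero] at h
  change E₁ r s * E₁ r s * E₂ r s - (r + s) • (E₁ r s * E₂ r s * E₁ r s)
    + (r * s) • (E₂ r s * E₁ r s * E₁ r s) = 0 at h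
  rw [← sub_eq_zero, ← h]
  simp only [E₃, mul_sub, sub_mul, smul_sub, mul_smul_comm, smul_mul_assoc, mul_assoc]
  module

lemma E₃_mul_E₂ (r s : ℂ) : E₃ r s * E₂ r s = r • (E₂ r s * E₃ r s) := by
  have h := RingQuot.mkAlgHom_rel ℂ (URel.serre2 (r := r) (s := s))
  simp only [map_add, map_sub, map_smul, map_mul, map_zero] at h
  change E₁ r s * E₂ r s * E₂ r s - (r + s) • (E₂ r s * E₁ r s * E₂ r s)
    + (r * s) • (E₂ r s * E₂ r s * E₁ r s) = 0 at h
  rw [← sub_eq_zero, ← h]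
  simp only [E₃, mul_sub, sub_mul, smul_sub, mul_smul_comm, smul_mul_assoc, mul_assoc]
  module

lemma E₁_mul_E₂ (r s : ℂ) : E₁ r s * E₂ r s = s • (E₂ r s * E₁ r s) + E₃ r s := by
  simp only [E₃]
  abel

lemma E₁_mul_E₃_pow (r s : ℂ) (b : ℕ) :
    E₁ r s * E₃ r s ^ b = r ^ b • (E₃ r s ^ b * E₁ r s) := by
  induction b with
  | zero => simp
  | succ b ih =>
    rw [pow_succ, ← mul_assoc, ih, smul_mul_assoc, mul_assoc, E₁_mul_E₃, mul_smul_comm,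
      smul_smul, ← mul_assoc, pow_succ]

/-- Moving `E₁` past a power of `E₂`; the coefficient of the correction term is not needed. -/
lemma E₁_mul_E₂_pow_succ (r s : ℂ) (a : ℕ) : ∃ c : ℂ,
    E₁ r s * E₂ r s ^ (a + 1) =
      s ^ (a + 1) • (E₂ r s ^ (a + 1) * E₁ r s) + c • (E₂ r s ^ a * E₃ r s) := by
  induction a with
  | zero => exact ⟨1, by simp [E₁_mul_E₂]⟩
  | succ a ih =>
    obtain ⟨c, hc⟩ := ih
    refine ⟨s ^ (a + 1) + c * r, ?_⟩
    rw [pow_succ _ (a + 1), ← mul_assoc, hc, add_mul, smul_mul_assoc, smul_mul_assoc, mul_assoc,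
      mul_assoc, E₁_mul_E₂, E₃_mul_E₂, mul_add, mul_smul_comm, mul_smul_comm, ← mul_assoc,
      ← mul_assoc, ← pow_succ, ← pow_succ]
    module

/-- The ordered monomial `E₂ᵃE₃ᵇE₁ᶜ`, indexed by `p = (a, b, c)`. -/
def monomialU (r s : ℂ) (p : ℕ × ℕ × ℕ) : Usl3 r s :=
  E₂ r s ^ p.1 * (E₃ r s ^ p.2.1 * E₁ r s ^ p.2.2)

lemma E₂_mul_monomialU (r s : ℂ) (a b c : ℕ) :
    E₂ r s * monomialU r s (a, b, c) = monomialU r s (a + 1, b, c) := by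
  simp only [monomialU, pow_succ', mul_assoc]

lemma E₁_mul_monomialU_mem (r s : ℂ) (a b c : ℕ) :
    E₁ r s * monomialU r s (a, b, c) ∈ Submodule.span ℂ (Set.range (monomialU r s)) := by
  have hmem (p) : monomialU r s p ∈ Submodule.span ℂ (Set.range (monomialU r s)) :=
    Submodule.subset_span ⟨p, rfl⟩
  have hE (b c : ℕ) : E₁ r s * (E₃ r s ^ b * E₁ r s ^ c) =
      r ^ b • (E₃ r s ^ b * E₁ r s ^ (c + 1)) := by
    rw [← mul_assoc, E₁_mul_E₃_pow, smul_mul_assoc, mul_assoc, ← pow_succ']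
  cases a with
  | zero =>
    have h : E₁ r s * monomialU r s (0, b, c) = r ^ b • monomialU r s (0, b, c + 1) := by
      simp only [monomialU, pow_zero, one_mul, hE]
    rw [h]
    exact Submodule.smul_mem _ _ (hmem _)
  | succ a =>
    obtain ⟨d, hd⟩ := E₁_mul_E₂_pow_succ r s a
    have h : E₁ r s * monomialU r s (a + 1, b, c) =
        (s ^ (a + 1) * r ^ b) • monomialU r s (a + 1, b, c + 1)
          + d • monomialU r s (a, b + 1, c) := by
      simp only [monomialU]
      rw [← mul_assoc, hd, add_mul, smul_mul_assoc, smul_mul_assoc, mul_assoc, mul_assoc, hE,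
        mul_smul_comm, smul_smul, ← mul_assoc (E₃ r s), ← pow_succ']
    rw [h]
    exact Submodule.add_mem _ (Submodule.smul_mem _ _ (hmem _)) (Submodule.smul_mem _ _ (hmem _))

/-- The ordered monomials span `U`: their span contains `1` and is stable under left
multiplication by the generators. -/
lemma monomial_span (r s : ℂ) (u : Usl3 r s) :
    u ∈ Submodule.span ℂ (Set.range (monomialU r s)) := by
  obtain ⟨x, rfl⟩ := RingQuot.mkAlgHom_surjective ℂ (URel r s) u
  have key : ∀ n ∈ Submodule.span ℂ (Set.range (monomialU r s)),
      RingQuot.mkAlgHom ℂ (URel r s) x * n ∈ Submodule.span ℂ (Set.range (monomialU r s)) := by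
    induction x using FreeAlgebra.induction with
    | grade0 c =>
      intro n hn
      rw [AlgHom.commutes, ← Algebra.smul_def]
      exact Submodule.smul_mem _ _ hn
    | grade1 i =>
      intro n hn
      induction hn using Submodule.span_induction with
      | mem y hy =>
        obtain ⟨⟨a, b, c⟩, rfl⟩ := hy
        fin_cases i
        · exact E₁_mul_monomialU_mem r s a b c
        · change E₂ r s * _ ∈ _
          rw [E₂_mul_monomialU]
          exact Submodule.subset_span ⟨_, rfl⟩
      | zero => simp
      | add y z _ _ hy hz => rw [mul_add]; exact Submodule.add_mem _ hy hz
      | smul d y _ hy => rw [mul_smul_comm]; exact Submodule.smul_mem _ _ hy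
    | mul x y hx hy =>
      intro n hn
      rw [map_mul, mul_assoc]
      exact hx _ (hy _ hn)
    | add x y hx hy =>
      intro n hn
      rw [map_add, add_mul]
      exact Submodule.add_mem _ (hx _ hn) (hy _ hn)
  simpa using key 1 (Submodule.subset_span ⟨(0, 0, 0), by simp [monomialU]⟩)

/-! ### Relations in the quantum torus -/

section Torus

variable (r s : ℂ)

lemma T₁_mul_T₁inv : T₁ r s * T₁inv r s = 1 := by
  simpa only [map_mul, map_one] using! RingQuot.mkAlgHom_rel ℂ (QRel.t1inv (r := r) (s := s))

lemma T₁inv_mul_T₁ : T₁inv r s * T₁ r s = 1 := by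
  simpa only [map_mul, map_one] using! RingQuot.mkAlgHom_rel ℂ (QRel.invt1 (r := r) (s := s))

lemma T₁_mul_T₂ : T₁ r s * T₂ r s = s • (T₂ r s * T₁ r s) := by
  simpa only [map_mul, map_smul] using! RingQuot.mkAlgHom_rel ℂ (QRel.t1t2 (r := r) (s := s))

lemma T₁_mul_T₃ : T₁ r s * T₃ r s = r • (T₃ r s * T₁ r s) := by
  simpa only [map_mul, map_smul] using! RingQuot.mkAlgHom_rel ℂ (QRel.t1t3 (r := r) (s := s))

lemma T₂_mul_T₃ : T₂ r s * T₃ r s = r⁻¹ • (T₃ r s * T₂ r s) := by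
  simpa only [map_mul, map_smul] using! RingQuot.mkAlgHom_rel ℂ (QRel.t2t3 (r := r) (s := s))

variable {r}

lemma T₁inv_mul_T₃ (hr : r ≠ 0) : T₁inv r s * T₃ r s = r⁻¹ • (T₃ r s * T₁inv r s) := by
  have h : T₁inv r s * (T₁ r s * T₃ r s) * T₁inv r s = T₃ r s * T₁inv r s := by
    rw [← mul_assoc, T₁inv_mul_T₁, one_mul]
  rw [← h, T₁_mul_T₃, mul_smul_comm, smul_mul_assoc, smul_smul, inv_mul_cancel₀ hr, one_smul,
    mul_assoc, mul_assoc, T₁_mul_T₁inv, mul_one]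

/-- The prescribed image of `E₂` in the quantum torus. -/
def imageE₂ (r s : ℂ) : QT3 r s := T₂ r s + (r - s)⁻¹ • (T₃ r s * T₁inv r s)

lemma T₁_imageE₂ {s : ℂ} (hrs : r ≠ s) :
    T₁ r s * imageE₂ r s - s • (imageE₂ r s * T₁ r s) = T₃ r s := by
  have h1 : T₁ r s * (T₃ r s * T₁inv r s) = r • T₃ r s := by
    rw [← mul_assoc, T₁_mul_T₃, smul_mul_assoc, mul_assoc, T₁_mul_T₁inv, mul_one]
  have h2 : T₃ r s * T₁inv r s * T₁ r s = T₃ r s := by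
    rw [mul_assoc, T₁inv_mul_T₁, mul_one]
  rw [imageE₂, mul_add, add_mul, mul_smul_comm, smul_mul_assoc, h1, h2, T₁_mul_T₂]
  have h3 : ((r - s)⁻¹ * (r - s)) • T₃ r s = T₃ r s := by
    rw [inv_mul_cancel₀ (sub_ne_zero.mpr hrs), one_smul]
  nth_rewrite 3 [← h3]
  module

lemma T₃_imageE₂ (hr : r ≠ 0) :
    T₃ r s * imageE₂ r s = r • (imageE₂ r s * T₃ r s) := by
  rw [imageE₂, mul_add, add_mul, T₂_mul_T₃, smul_mul_assoc, mul_assoc (T₃ r s), T₁inv_mul_T₃ s hr,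
    mul_smul_comm, mul_smul_comm, smul_add, smul_smul, smul_smul, smul_smul, mul_inv_cancel₀ hr,
    one_smul]
  congr 2
  field_simp

end Torus

/-- The homomorphism `I`: the Serre relations reduce to `T₁T₃ = rT₃T₁` and
`T₃ · imageE₂ = r imageE₂ · T₃`. -/
def homI (r s : ℂ) (hr : r ≠ 0) (hrs : r ≠ s) : Usl3 r s →ₐ[ℂ] QT3 r s :=
  RingQuot.liftAlgHom ℂ ⟨FreeAlgebra.lift ℂ ![T₁ r s, imageE₂ r s], by
    have h3 := T₁_imageE₂ hrs
    intro x y h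
    cases h with
    | serre1 =>
      have h := T₁_mul_T₃ r s
      rw [← h3, ← sub_eq_zero] at h
      simp only [map_add, map_sub, map_smul, map_mul, map_zero, FreeAlgebra.lift_ι_apply,
        Matrix.cons_val_zero, Matrix.cons_val_one]
      rw [← h]
      simp only [mul_sub, sub_mul, smul_sub, mul_smul_comm, smul_mul_assoc, mul_assoc]
      module
    | serre2 =>
      have h := T₃_imageE₂ s hr
      rw [← h3, ← sub_eq_zero] at h
      simp only [map_add, map_sub, map_smul, map_mul, map_zero, FreeAlgebra.lift_ι_apply,
        Matrix.cons_val_zero, Matrix.cons_val_one]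
      rw [← h]
      simp only [mul_sub, sub_mul, smul_sub, mul_smul_comm, smul_mul_assoc, mul_assoc]
      module⟩

lemma homI_E₁ (r s : ℂ) (hr : r ≠ 0) (hrs : r ≠ s) : homI r s hr hrs (E₁ r s) = T₁ r s := by
  simp [homI, E₁]

lemma homI_E₂ (r s : ℂ) (hr : r ≠ 0) (hrs : r ≠ s) :
    homI r s hr hrs (E₂ r s) = imageE₂ r s := by
  simp [homI, E₂]

/-! ### The regular representation of the quantum torus -/

/-- A weighted shift on functions on `ℤ³`: shift by `(x, y, z)`, then multiply by `w`. -/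
def wshift (w : ℤ → ℤ → ℤ → ℂ) (x y z : ℤ) : Module.End ℂ (ℤ → ℤ → ℤ → ℂ) where
  toFun f := fun i j k => w i j k * f (i - x) (j - y) (k - z)
  map_add' f g := by ext i j k; simp [mul_add]
  map_smul' c f := by ext i j k; simp [mul_left_comm]

@[simp] lemma wshift_apply (w : ℤ → ℤ → ℤ → ℂ) (x y z : ℤ) (f : ℤ → ℤ → ℤ → ℂ) (i j k : ℤ) :
    wshift w x y z f i j k = w i j k * f (i - x) (j - y) (k - z) := rfl

/-- The left regular representation of the quantum torus, with the delta function at `(i, j, k)`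
playing the role of `T₂ⁱT₃ʲT₁ᵏ`. -/
def torusRep (r s : ℂ) (hr : r ≠ 0) (hs : s ≠ 0) :
    QT3 r s →ₐ[ℂ] Module.End ℂ (ℤ → ℤ → ℤ → ℂ) :=
  RingQuot.liftAlgHom ℂ ⟨FreeAlgebra.lift ℂ
    ![wshift (fun i j _ => s ^ i * r ^ j) 0 0 1, wshift (fun i j _ => (s ^ i * r ^ j)⁻¹) 0 0 (-1),
      wshift (fun _ _ _ => 1) 1 0 0, wshift (fun _ _ _ => 1) (-1) 0 0,
      wshift (fun i _ _ => r ^ i) 0 1 0, wshift (fun i _ _ => (r ^ i)⁻¹) 0 (-1) 0], by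
    intro x y h
    have hr' (i : ℤ) : r ^ i ≠ 0 := zpow_ne_zero i hr
    have hs' (i : ℤ) : s ^ i ≠ 0 := zpow_ne_zero i hs
    cases h <;> ext f i j k <;>
      simp [FreeAlgebra.lift_ι_apply, zpow_sub₀ hr, zpow_sub₀ hs] <;> field_simp⟩

/-- The vector obtained by letting `I(E₂ᵃE₃ᵇE₁ᶜ)` act on the delta function at the origin. -/
def monomialVec (r s : ℂ) (hr : r ≠ 0) (hs : s ≠ 0) (p : ℕ × ℕ × ℕ) : ℤ → ℤ → ℤ → ℂ :=
  torusRep r s hr hs (imageE₂ r s ^ p.1 * (T₃ r s ^ p.2.1 * T₁ r s ^ p.2.2))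
    (fun i j k => if i = 0 ∧ j = 0 ∧ k = 0 then 1 else 0)

section Rep

variable (r s : ℂ) (hr : r ≠ 0) (hs : s ≠ 0)

lemma torusRep_T₁ (f : ℤ → ℤ → ℤ → ℂ) (i j k : ℤ) :
    torusRep r s hr hs (T₁ r s) f i j k = s ^ i * r ^ j * f i j (k - 1) := by
  simp [torusRep, T₁]

lemma torusRep_T₃ (f : ℤ → ℤ → ℤ → ℂ) (i j k : ℤ) :
    torusRep r s hr hs (T₃ r s) f i j k = r ^ i * f i (j - 1) k := by
  simp [torusRep, T₃]

lemma torusRep_imageE₂ (f : ℤ → ℤ → ℤ → ℂ) (i j k : ℤ) :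
    torusRep r s hr hs (imageE₂ r s) f i j k =
      f (i - 1) j k + (r - s)⁻¹ * (r ^ i * ((s ^ i * r ^ (j - 1))⁻¹ * f i (j - 1) (k + 1))) := by
  simp [torusRep, imageE₂, T₂, T₃, T₁inv]

/-- Triangularity: on the half space `i ≥ a`, the vector of `(a, b, c)` is the delta function at
`(a, b, c)`. -/
lemma monomialVec_apply (a b c : ℕ) (i j k : ℤ) (hi : (a : ℤ) ≤ i) :
    monomialVec r s hr hs (a, b, c) i j k = if i = a ∧ j = b ∧ k = c then 1 else 0 := by
  induction a generalizing i j k with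
  | zero =>
    clear hi
    simp only [monomialVec, pow_zero, one_mul]
    induction b generalizing i j k with
    | zero =>
      simp only [pow_zero, one_mul]
      induction c generalizing i j k with
      | zero => simp
      | succ c ih =>
        rw [pow_succ', map_mul, Module.End.mul_apply, torusRep_T₁, ih]
        by_cases h : i = 0 ∧ j = 0 ∧ k = c + 1
        · obtain ⟨rfl, rfl, rfl⟩ := h
          simp
        · rw [if_neg (by push_cast; omega), if_neg (by push_cast; omega), mul_zero]
    | succ b ih =>
      rw [pow_succ', mul_assoc, map_mul, Module.End.mul_apply, torusRep_T₃, ih]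
      by_cases h : i = 0 ∧ j = b + 1 ∧ k = c
      · obtain ⟨rfl, rfl, rfl⟩ := h
        simp
      · rw [if_neg (by push_cast; omega), if_neg (by push_cast; omega), mul_zero]
  | succ a ih =>
    have h : monomialVec r s hr hs (a + 1, b, c) =
        torusRep r s hr hs (imageE₂ r s) (monomialVec r s hr hs (a, b, c)) := by
      simp only [monomialVec]
      rw [pow_succ', mul_assoc, map_mul, Module.End.mul_apply]
    push_cast at hi
    rw [h, torusRep_imageE₂, ih _ _ _ (by omega), ih _ _ _ (by omega),
      if_neg (c := i = a ∧ j - 1 = b ∧ k + 1 = c) (by omega)]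
    simp only [mul_zero, add_zero]
    congr 1
    push_cast
    simp only [eq_iff_iff]
    omega

/-- Linear independence of the vectors `monomialVec`, by looking at a point of the support with
largest first coordinate. -/
lemma eq_zero_of_triangular (f : ℕ × ℕ × ℕ →₀ ℂ)
    (hf : f.sum (fun p c => c • monomialVec r s hr hs p) = 0) : f = 0 := by
  by_contra hne
  obtain ⟨⟨a, b, c⟩, hp, hmax⟩ := f.support.exists_max_image (fun p => p.1)
    (Finsupp.support_nonempty_iff.mpr hne)
  have h := congrFun (congrFun (congrFun hf a) b) c
  simp only [Finsupp.sum, Finset.sum_apply, Pi.smul_apply, Pi.zero_apply, smul_eq_mul] at h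
  rw [Finset.sum_eq_single_of_mem _ hp] at h
  · rw [monomialVec_apply _ _ _ _ _ _ _ _ _ _ le_rfl] at h
    exact Finsupp.mem_support_iff.mp hp (by simpa using h)
  · rintro ⟨a', b', c'⟩ hq hqp
    rw [monomialVec_apply _ _ _ _ _ _ _ _ _ _ (by exact_mod_cast hmax _ hq), if_neg, mul_zero]
    rintro ⟨h1, h2, h3⟩
    apply hqp
    simp only [Prod.mk.injEq]
    omega

end Rep


/-- there is a unique `ℂ`-algebra homomorphism `I : U⁺_{r,s}(sl₃) → Q₃` with
`I(E₁) = T₁` and `I(E₂) = T₂ + (r-s)⁻¹T₃T₁⁻¹`; further it satisfies `I(E₃) = T₃` and it is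
injective. -/
theorem stmt12 (r s : ℂ) (hr : r ≠ 0) (hs : s ≠ 0)
    (hind : ∀ m n : ℤ, r ^ m * s ^ n = 1 → m = 0 ∧ n = 0) :
    (∃! I : Usl3 r s →ₐ[ℂ] QT3 r s,
      I (E₁ r s) = T₁ r s ∧
        I (E₂ r s) = T₂ r s + (r - s)⁻¹ • (T₃ r s * T₁inv r s)) ∧
    ∀ I : Usl3 r s →ₐ[ℂ] QT3 r s,
      (I (E₁ r s) = T₁ r s ∧
        I (E₂ r s) = T₂ r s + (r - s)⁻¹ • (T₃ r s * T₁inv r s)) →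
      I (E₃ r s) = T₃ r s ∧ Function.Injective I := by
  have hrs : r ≠ s := by
    rintro rfl
    simpa using hind 1 (-1) (by simp [hr])
  refine ⟨⟨homI r s hr hrs, ⟨homI_E₁ r s hr hrs, homI_E₂ r s hr hrs⟩, ?_⟩, ?_⟩
  · rintro J ⟨hJ1, hJ2⟩
    apply RingQuot.ringQuot_ext'
    apply FreeAlgebra.hom_ext
    funext i
    fin_cases i
    · exact hJ1.trans (homI_E₁ r s hr hrs).symm
    · exact hJ2.trans (homI_E₂ r s hr hrs).symm
  · rintro I ⟨h1, h2⟩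
    change I (E₂ r s) = imageE₂ r s at h2
    have h3 : I (E₃ r s) = T₃ r s := by
      rw [E₃, map_sub, map_smul, map_mul, map_mul, h1, h2, T₁_imageE₂ hrs]
    refine ⟨h3, (injective_iff_map_eq_zero I).mpr fun u hu => ?_⟩
    obtain ⟨f, rfl⟩ := (Finsupp.mem_span_range_iff_exists_finsupp).mp (monomial_span r s u)
    have hf : f = 0 := by
      apply eq_zero_of_triangular r s hr hs
      have h := congrArg (fun q => torusRep r s hr hs q
        (fun i j k => if i = 0 ∧ j = 0 ∧ k = 0 then 1 else 0)) hu
      simpa only [Finsupp.sum, map_sum, map_smul, monomialU, map_mul, map_pow, h1, h2, h3,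
        LinearMap.sum_apply, LinearMap.smul_apply, map_zero, LinearMap.zero_apply,
        monomialVec] using h
    simp [hf]
end
end

section
/- Let D be a derivation of U = U^+_{r,s}(sl_3). Then there exist an element t ∈ U and scalars μ_1, μ_2 ∈ ℂ such that D(E_1) = tE_1 − E_1t + μ_1E_1 and D(E_2) = tE_2 − E_2t + μ_2E_2; moreover D(E_3) = tE_3 − E_3t + (μ_1 + μ_2)E_3 for E_3 = E_1E_2 − sE_2E_1. Equivalently, D = ad_t + μ_1D_1 + μ_2D_2, where D_1, D_2 are the derivations of U determined by D_1(E_1) = E_1, D_1(E_2) = 0, D_2(E_1) = 0, D_2(E_2) = E_2. -/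
/-!
Put `E₄ = E₁E₂ - rE₂E₁`. The Serre relations say exactly that `E₁E₃ = rE₃E₁`, `E₃E₂ = rE₂E₃`, and
likewise for `E₄` with `s` in place of `r`; moreover `E₃` and `E₄` commute and
`(r - s)E₂E₁ = E₃ - E₄`. So `U` is a generalized Weyl algebra over `R = ℂ[E₃, E₄]`: it is
`ℤ`-graded, free over `R` on `eₙ = E₁ⁿ` (`n ≥ 0`), `eₙ = E₂⁻ⁿ` (`n ≤ 0`), and `eₙ` commutes past
`E₃`, `E₄` up to the factors `rⁿ`, `sⁿ`. Freeness is proved by writing down the left regular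
representation on the candidate basis `E₃ⁱE₄ʲeₙ` (`rho`, `ofCoord_toCoord`, `toCoord_mon`).

Let `D` be a derivation. Comparing coefficients in `[D E₃, E₄] = [D E₄, E₃]` shows that the part of
`D E₃` in nonzero degrees is `[t, E₃]` for some `t` (`exists_inner`). After subtracting `ad_t`,
`D E₃` has degree zero, and so has `D E₄` (`D_E₄_mem`). Applying `D` to the quasi-commutation
relations, multiplicative independence gives `D E₃ = αE₃`, `D E₄ = βE₄`, `D E₁ = FE₁` and
`D E₂ = HE₂` with `F, H ∈ R`. Applying `D` to `(r - s)E₂E₁ = E₃ - E₄` forces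
`H = α - σ⁻¹(F)` (`coef_of_mul_sub`), where `σ` is the automorphism `E₃ ↦ rE₃`, `E₄ ↦ sE₄` of `R`.
Since `σ` is diagonal on monomials with eigenvalue `1` only on constants, `F = u - σ(u) + μ₁` is
solvable in `R`, and then `D = ad_u + μ₁D₁ + (α - μ₁)D₂` (`exists_of_deg_zero`).
-/

noncomputable section

open FreeAlgebra

namespace Usl3Der

/-! ### Commutation relations in `U` -/

/-- The companion `E₁E₂ - rE₂E₁` of `E₃ = E₁E₂ - sE₂E₁`, with the roles of `r` and `s`
exchanged. -/
def E₄ (r s : ℂ) : Usl3 r s := E₁ r s * E₂ r s - r • (E₂ r s * E₁ r s)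

theorem serre_one (r s : ℂ) : E₁ r s * E₁ r s * E₂ r s - (r + s) • (E₁ r s * E₂ r s * E₁ r s)
    + (r * s) • (E₂ r s * E₁ r s * E₁ r s) = 0 := by
  simpa [E₁, E₂] using RingQuot.mkAlgHom_rel ℂ (URel.serre1 (r := r) (s := s))

theorem serre_two (r s : ℂ) : E₁ r s * E₂ r s * E₂ r s - (r + s) • (E₂ r s * E₁ r s * E₂ r s)
    + (r * s) • (E₂ r s * E₂ r s * E₁ r s) = 0 := by
  simpa [E₁, E₂] using RingQuot.mkAlgHom_rel ℂ (URel.serre2 (r := r) (s := s))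

section QCommute

variable {A : Type*} [Ring A] [Algebra ℂ A] {a b : A} {q : ℂ}

theorem qcomm_pow_right (h : a * b = q • (b * a)) (m : ℕ) :
    a * b ^ m = q ^ m • (b ^ m * a) := by
  induction m with
  | zero => simp
  | succ m ih =>
    rw [pow_succ, ← mul_assoc, ih, smul_mul_assoc, mul_assoc, h, mul_smul_comm, smul_smul,
      ← mul_assoc, pow_succ]

theorem qcomm_pow_left (h : a * b = q • (b * a)) (m : ℕ) :
    a ^ m * b = q ^ m • (b * a ^ m) := by
  induction m with
  | zero => simp
  | succ m ih =>
    rw [pow_succ', mul_assoc, ih, mul_smul_comm, ← mul_assoc, h, smul_mul_assoc, smul_smul,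
      mul_assoc, pow_succ]

/-- The first Serre relation is the statement that `a` quasi-commutes with `ab - s ba`. -/
theorem serre_of_left {r s : ℂ}
    (h : a * (a * b - s • (b * a)) = r • ((a * b - s • (b * a)) * a)) :
    a * a * b - (r + s) • (a * b * a) + (r * s) • (b * a * a) = 0 := by
  rw [← sub_eq_zero] at h
  rw [← h]
  simp only [mul_sub, sub_mul, mul_smul_comm, smul_mul_assoc, mul_assoc]
  module

/-- The second Serre relation is the statement that `b` quasi-commutes with `ab - s ba`. -/
theorem serre_of_right {r s : ℂ}
    (h : (a * b - s • (b * a)) * b = r • (b * (a * b - s • (b * a)))) :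
    a * b * b - (r + s) • (b * a * b) + (r * s) • (b * b * a) = 0 := by
  rw [← sub_eq_zero] at h
  rw [← h]
  simp only [mul_sub, sub_mul, mul_smul_comm, smul_mul_assoc, mul_assoc]
  module

end QCommute

theorem E₁_E₃ (r s : ℂ) : E₁ r s * E₃ r s = r • (E₃ r s * E₁ r s) := by
  have h := serre_one r s
  rw [← sub_eq_zero, ← h]
  simp only [E₃, mul_sub, sub_mul, mul_smul_comm, smul_mul_assoc, mul_assoc]
  module

theorem E₁_E₄ (r s : ℂ) : E₁ r s * E₄ r s = s • (E₄ r s * E₁ r s) := by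
  have h := serre_one r s
  rw [← sub_eq_zero, ← h]
  simp only [E₄, mul_sub, sub_mul, mul_smul_comm, smul_mul_assoc, mul_assoc]
  module

theorem E₂_E₃ (r s : ℂ) (hr : r ≠ 0) : E₂ r s * E₃ r s = r⁻¹ • (E₃ r s * E₂ r s) := by
  have h := serre_two r s
  rw [eq_inv_smul_iff₀ hr, eq_comm, ← sub_eq_zero, ← h]
  simp only [E₃, mul_sub, sub_mul, mul_smul_comm, smul_mul_assoc, mul_assoc]
  module

theorem E₂_E₄ (r s : ℂ) (hs : s ≠ 0) : E₂ r s * E₄ r s = s⁻¹ • (E₄ r s * E₂ r s) := by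
  have h := serre_two r s
  rw [eq_inv_smul_iff₀ hs, eq_comm, ← sub_eq_zero, ← h]
  simp only [E₄, mul_sub, sub_mul, mul_smul_comm, smul_mul_assoc, mul_assoc]
  module

theorem E₂_E₁ (r s : ℂ) (hrs : r - s ≠ 0) :
    E₂ r s * E₁ r s = (r - s)⁻¹ • (E₃ r s - E₄ r s) := by
  rw [eq_inv_smul_iff₀ hrs, E₃, E₄]
  module

theorem E₁_E₂ (r s : ℂ) (hrs : r - s ≠ 0) :
    E₁ r s * E₂ r s = (r - s)⁻¹ • (r • E₃ r s - s • E₄ r s) := by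
  rw [eq_inv_smul_iff₀ hrs, E₃, E₄]
  module

theorem E₃_E₄ (r s : ℂ) (hr : r ≠ 0) : E₃ r s * E₄ r s = E₄ r s * E₃ r s := by
  have h1 : E₁ r s * E₂ r s * E₃ r s = E₃ r s * (E₁ r s * E₂ r s) := by
    rw [mul_assoc, E₂_E₃ r s hr, mul_smul_comm, ← mul_assoc, E₁_E₃, smul_mul_assoc,
      inv_smul_smul₀ hr, mul_assoc]
  have h2 : E₂ r s * E₁ r s * E₃ r s = E₃ r s * (E₂ r s * E₁ r s) := by
    rw [mul_assoc, E₁_E₃, mul_smul_comm, ← mul_assoc, E₂_E₃ r s hr, smul_mul_assoc,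
      smul_inv_smul₀ hr, mul_assoc]
  rw [E₄, mul_sub, sub_mul, mul_smul_comm, smul_mul_assoc, h1, h2]

/-! ### The family `E₃ⁱE₄ʲeₙ` -/

/-- The element `eₙ` of `U`: `E₁ⁿ` for `n ≥ 0` and `E₂⁻ⁿ` for `n ≤ 0`
(one of the two truncated exponents is always zero). -/
def eZ (r s : ℂ) (n : ℤ) : Usl3 r s := E₁ r s ^ n.toNat * E₂ r s ^ (-n).toNat

/-- The monomial `E₃ⁱE₄ʲeₙ`; these form a basis of `U`. -/
def mon (r s : ℂ) (k : ℕ × ℕ × ℤ) : Usl3 r s :=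
  E₃ r s ^ k.1 * E₄ r s ^ k.2.1 * eZ r s k.2.2

theorem eZ_zero (r s : ℂ) : eZ r s 0 = 1 := by simp [eZ]

theorem eZ_natCast (r s : ℂ) (m : ℕ) : eZ r s m = E₁ r s ^ m := by simp [eZ]

theorem eZ_neg_natCast (r s : ℂ) (m : ℕ) : eZ r s (-m) = E₂ r s ^ m := by simp [eZ]

theorem eZ_one (r s : ℂ) : eZ r s 1 = E₁ r s := by simp [eZ]

theorem eZ_neg_one (r s : ℂ) : eZ r s (-1) = E₂ r s := by simp [eZ]

theorem E₁_eZ_nonneg (r s : ℂ) {n : ℤ} (hn : 0 ≤ n) : E₁ r s * eZ r s n = eZ r s (n + 1) := by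
  obtain ⟨m, rfl⟩ := Int.eq_ofNat_of_zero_le hn
  have := eZ_natCast r s (m + 1)
  push_cast at this
  rw [this, eZ_natCast, pow_succ']

theorem E₂_eZ_nonpos (r s : ℂ) {n : ℤ} (hn : n ≤ 0) : E₂ r s * eZ r s n = eZ r s (n - 1) := by
  obtain ⟨m, hm⟩ := Int.eq_ofNat_of_zero_le (neg_nonneg.mpr hn)
  obtain rfl : n = -m := by omega
  have := eZ_neg_natCast r s (m + 1)
  push_cast at this
  rw [show -(m : ℤ) - 1 = -(m + 1) by ring, this, eZ_neg_natCast, pow_succ']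

theorem E₁_eZ_neg (r s : ℂ) {n : ℤ} (hn : n < 0) :
    E₁ r s * eZ r s n = E₁ r s * E₂ r s * eZ r s (n + 1) := by
  rw [mul_assoc, E₂_eZ_nonpos r s (by omega), add_sub_cancel_right]

theorem E₂_eZ_pos (r s : ℂ) {n : ℤ} (hn : 0 < n) :
    E₂ r s * eZ r s n = E₂ r s * E₁ r s * eZ r s (n - 1) := by
  rw [mul_assoc, E₁_eZ_nonneg r s (by omega), sub_add_cancel]

/-- Any element quasi-commuting with `E₁` and `E₂` with inverse factors quasi-commutes
with `eₙ`, the factor being the `n`-th power. -/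
theorem eZ_qcomm (r s : ℂ) {q : ℂ} {z : Usl3 r s}
    (h1 : E₁ r s * z = q • (z * E₁ r s)) (h2 : E₂ r s * z = q⁻¹ • (z * E₂ r s)) (n : ℤ) :
    eZ r s n * z = q ^ n • (z * eZ r s n) := by
  obtain ⟨m, rfl | rfl⟩ := n.eq_nat_or_neg
  · rw [eZ_natCast, qcomm_pow_left h1, zpow_natCast]
  · rw [eZ_neg_natCast, qcomm_pow_left h2, zpow_neg, zpow_natCast, inv_pow]

theorem E₃_mon (r s : ℂ) (i j : ℕ) (n : ℤ) :
    E₃ r s * mon r s (i, j, n) = mon r s (i + 1, j, n) := by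
  simp only [mon, pow_succ', mul_assoc]

theorem E₄_mon (r s : ℂ) (hr : r ≠ 0) (i j : ℕ) (n : ℤ) :
    E₄ r s * mon r s (i, j, n) = mon r s (i, j + 1, n) := by
  have h : Commute (E₄ r s) (E₃ r s) := (E₃_E₄ r s hr).symm
  simp only [mon, pow_succ', ← mul_assoc]
  rw [(h.pow_right i).eq]

theorem mon_E₃ (r s : ℂ) (hr : r ≠ 0) (i j : ℕ) (n : ℤ) :
    mon r s (i, j, n) * E₃ r s = r ^ n • mon r s (i + 1, j, n) := by
  have h : Commute (E₄ r s) (E₃ r s) := (E₃_E₄ r s hr).symm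
  simp only [mon]
  rw [mul_assoc, eZ_qcomm r s (E₁_E₃ r s) (E₂_E₃ r s hr), mul_smul_comm, ← mul_assoc,
    mul_assoc _ _ (E₃ r s), (h.pow_left j).eq, pow_succ]
  simp only [mul_assoc]

theorem mon_E₄ (r s : ℂ) (hs : s ≠ 0) (i j : ℕ) (n : ℤ) :
    mon r s (i, j, n) * E₄ r s = s ^ n • mon r s (i, j + 1, n) := by
  simp only [mon]
  rw [mul_assoc, eZ_qcomm r s (E₁_E₄ r s) (E₂_E₄ r s hs), mul_smul_comm, ← mul_assoc, pow_succ]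
  simp only [mul_assoc]

theorem E₁_mul_mon (r s : ℂ) (i j : ℕ) (n : ℤ) :
    E₁ r s * mon r s (i, j, n) =
      (r ^ i * s ^ j) • (E₃ r s ^ i * E₄ r s ^ j * (E₁ r s * eZ r s n)) := by
  simp only [mon]
  rw [← mul_assoc, ← mul_assoc, qcomm_pow_right (E₁_E₃ r s), smul_mul_assoc, mul_assoc _ (E₁ r s),
    qcomm_pow_right (E₁_E₄ r s), mul_smul_comm, smul_smul, smul_mul_assoc]
  simp only [mul_assoc]

theorem E₂_mul_mon (r s : ℂ) (hr : r ≠ 0) (hs : s ≠ 0) (i j : ℕ) (n : ℤ) :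
    E₂ r s * mon r s (i, j, n) =
      (r⁻¹ ^ i * s⁻¹ ^ j) • (E₃ r s ^ i * E₄ r s ^ j * (E₂ r s * eZ r s n)) := by
  simp only [mon]
  rw [← mul_assoc, ← mul_assoc, qcomm_pow_right (E₂_E₃ r s hr), smul_mul_assoc,
    mul_assoc _ (E₂ r s),
    qcomm_pow_right (E₂_E₄ r s hs), mul_smul_comm, smul_smul, smul_mul_assoc]
  simp only [mul_assoc]

theorem mon_core_smul (r s : ℂ) (hr : r ≠ 0) (i j : ℕ) (n : ℤ) (c a b : ℂ) :
    E₃ r s ^ i * E₄ r s ^ j * (c • (a • E₃ r s - b • E₄ r s) * eZ r s n) =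
      c • (a • mon r s (i + 1, j, n) - b • mon r s (i, j + 1, n)) := by
  rw [← E₃_mon, ← E₄_mon r s hr]
  have h : Commute (E₄ r s) (E₃ r s) := (E₃_E₄ r s hr).symm
  have h3 : E₃ r s ^ i * E₄ r s ^ j * E₃ r s = E₃ r s * (E₃ r s ^ i * E₄ r s ^ j) := by
    rw [mul_assoc, (h.pow_left j).eq, ← mul_assoc, ← mul_assoc, pow_mul_comm']
  have h4 : E₃ r s ^ i * E₄ r s ^ j * E₄ r s = E₄ r s * (E₃ r s ^ i * E₄ r s ^ j) := by
    rw [mul_assoc, pow_mul_comm', ← mul_assoc, ← mul_assoc, (h.pow_right i).eq]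
  simp only [mon]
  rw [← mul_assoc, ← mul_assoc (E₃ r s), ← mul_assoc (E₄ r s), ← h3, ← h4]
  simp only [mul_smul_comm, smul_mul_assoc, mul_sub, sub_mul]

/-! ### The left regular representation in coordinates -/

/-- Coordinate space for `U`: finitely supported families indexed like the monomials `mon`. -/
abbrev Coord := ℕ × ℕ × ℤ →₀ ℂ

/-- Coordinates of `E₃ⁱE₄ʲeₙ`. -/
def sg (i j : ℕ) (n : ℤ) : Coord := Finsupp.single (i, j, n) 1

/-- Left multiplication by `E₁` in coordinates. -/
def opX (r s : ℂ) : Module.End ℂ Coord := Finsupp.linearCombination ℂ fun k =>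
  (r ^ k.1 * s ^ k.2.1) • if 0 ≤ k.2.2 then sg k.1 k.2.1 (k.2.2 + 1) else
    (r - s)⁻¹ • (r • sg (k.1 + 1) k.2.1 (k.2.2 + 1) - s • sg k.1 (k.2.1 + 1) (k.2.2 + 1))

/-- Left multiplication by `E₂` in coordinates. -/
def opY (r s : ℂ) : Module.End ℂ Coord := Finsupp.linearCombination ℂ fun k =>
  (r⁻¹ ^ k.1 * s⁻¹ ^ k.2.1) • if k.2.2 ≤ 0 then sg k.1 k.2.1 (k.2.2 - 1) else
    (r - s)⁻¹ • (sg (k.1 + 1) k.2.1 (k.2.2 - 1) - sg k.1 (k.2.1 + 1) (k.2.2 - 1))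

/-- Left multiplication by `E₃` in coordinates. -/
def opZ : Module.End ℂ Coord := Finsupp.linearCombination ℂ fun k => sg (k.1 + 1) k.2.1 k.2.2

/-- Left multiplication by `E₄` in coordinates. -/
def opW : Module.End ℂ Coord := Finsupp.linearCombination ℂ fun k => sg k.1 (k.2.1 + 1) k.2.2

theorem opX_sg (r s : ℂ) (i j : ℕ) (n : ℤ) : opX r s (sg i j n) =
    (r ^ i * s ^ j) • if 0 ≤ n then sg i j (n + 1) else
      (r - s)⁻¹ • (r • sg (i + 1) j (n + 1) - s • sg i (j + 1) (n + 1)) := by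
  simp only [opX, sg, Finsupp.linearCombination_single, one_smul]

theorem opY_sg (r s : ℂ) (i j : ℕ) (n : ℤ) : opY r s (sg i j n) =
    (r⁻¹ ^ i * s⁻¹ ^ j) • if n ≤ 0 then sg i j (n - 1) else
      (r - s)⁻¹ • (sg (i + 1) j (n - 1) - sg i (j + 1) (n - 1)) := by
  simp only [opY, sg, Finsupp.linearCombination_single, one_smul]

theorem opZ_sg (i j : ℕ) (n : ℤ) : opZ (sg i j n) = sg (i + 1) j n := by
  simp only [opZ, sg, Finsupp.linearCombination_single, one_smul]

theorem opW_sg (i j : ℕ) (n : ℤ) : opW (sg i j n) = sg i (j + 1) n := by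
  simp only [opW, sg, Finsupp.linearCombination_single, one_smul]

theorem coord_ext {M : Type*} [AddCommMonoid M] [Module ℂ M] {f g : Coord →ₗ[ℂ] M}
    (h : ∀ i j n, f (sg i j n) = g (sg i j n)) : f = g := by
  ext ⟨i, j, n⟩
  simpa [sg] using h i j n

theorem opX_opY (r s : ℂ) (hr : r ≠ 0) (hs : s ≠ 0) :
    opX r s * opY r s = (r - s)⁻¹ • (r • opZ - s • opW) := by
  refine coord_ext fun i j n => ?_
  simp only [Module.End.mul_apply, LinearMap.smul_apply, LinearMap.sub_apply, opZ_sg, opW_sg,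
    opY_sg, map_smul]
  split_ifs with h
  · rw [opX_sg, if_neg (by omega), smul_smul, sub_add_cancel]
    rw [show r⁻¹ ^ i * s⁻¹ ^ j * (r ^ i * s ^ j) = 1 by simp only [inv_pow]; field_simp, one_smul]
  · simp only [map_smul, map_sub, opX_sg, if_pos (show 0 ≤ n - 1 by omega), sub_add_cancel]
    rw [smul_comm, smul_sub, smul_smul, smul_smul]
    rw [show r⁻¹ ^ i * s⁻¹ ^ j * (r ^ (i + 1) * s ^ j) = r by simp only [inv_pow, pow_succ]; field_simp,
      show r⁻¹ ^ i * s⁻¹ ^ j * (r ^ i * s ^ (j + 1)) = s by simp only [inv_pow, pow_succ]; field_simp]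

theorem opY_opX (r s : ℂ) (hr : r ≠ 0) (hs : s ≠ 0) :
    opY r s * opX r s = (r - s)⁻¹ • (opZ - opW) := by
  refine coord_ext fun i j n => ?_
  simp only [Module.End.mul_apply, LinearMap.smul_apply, LinearMap.sub_apply, opZ_sg, opW_sg,
    opX_sg, map_smul]
  split_ifs with h
  · rw [opY_sg, if_neg (by omega), smul_smul, add_sub_cancel_right]
    rw [show r ^ i * s ^ j * (r⁻¹ ^ i * s⁻¹ ^ j) = 1 by simp only [inv_pow]; field_simp, one_smul]
  · simp only [map_smul, map_sub, opY_sg, if_pos (show n + 1 ≤ 0 by omega), add_sub_cancel_right]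
    rw [smul_comm, smul_sub]
    simp only [smul_smul, ← mul_assoc]
    simp only [mul_assoc (_ * _) (r⁻¹ ^ _)]
    rw [show r ^ i * s ^ j * r * (r⁻¹ ^ (i + 1) * s⁻¹ ^ j) = 1 by simp only [inv_pow, pow_succ]; field_simp,
      show r ^ i * s ^ j * s * (r⁻¹ ^ i * s⁻¹ ^ (j + 1)) = 1 by simp only [inv_pow, pow_succ]; field_simp, one_smul, one_smul]

theorem opX_opZ (r s : ℂ) : opX r s * opZ = r • (opZ * opX r s) := by
  refine coord_ext fun i j n => ?_
  simp only [Module.End.mul_apply, LinearMap.smul_apply, opX_sg, opZ_sg, map_smul]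
  split_ifs with h <;> simp only [map_smul, map_sub, opZ_sg] <;> module

theorem opZ_opY (r s : ℂ) (hr : r ≠ 0) : opZ * opY r s = r • (opY r s * opZ) := by
  refine coord_ext fun i j n => ?_
  simp only [Module.End.mul_apply, LinearMap.smul_apply, opY_sg, opZ_sg, map_smul]
  rw [smul_smul, show r * (r⁻¹ ^ (i + 1) * s⁻¹ ^ j) = r⁻¹ ^ i * s⁻¹ ^ j by simp only [inv_pow, pow_succ]; field_simp]
  split_ifs with h <;> simp only [map_smul, map_sub, opZ_sg]

theorem opZ_eq (r s : ℂ) (hr : r ≠ 0) (hs : s ≠ 0) (hrs : r - s ≠ 0) :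
    opX r s * opY r s - s • (opY r s * opX r s) = opZ := by
  rw [opX_opY r s hr hs, opY_opX r s hr hs, smul_comm s (r - s)⁻¹,
    ← smul_sub (r - s)⁻¹ (_ : Module.End ℂ Coord), inv_smul_eq_iff₀ hrs]
  module

theorem opW_eq (r s : ℂ) (hr : r ≠ 0) (hs : s ≠ 0) (hrs : r - s ≠ 0) :
    opX r s * opY r s - r • (opY r s * opX r s) = opW := by
  rw [opX_opY r s hr hs, opY_opX r s hr hs, smul_comm r (r - s)⁻¹,
    ← smul_sub (r - s)⁻¹ (_ : Module.End ℂ Coord), inv_smul_eq_iff₀ hrs]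
  module

/-- The representation of `U` on `Coord`; it is the left regular representation written
in the basis `mon`. -/
def rho (r s : ℂ) (hr : r ≠ 0) (hs : s ≠ 0) (hrs : r - s ≠ 0) :
    Usl3 r s →ₐ[ℂ] Module.End ℂ Coord :=
  RingQuot.liftAlgHom ℂ ⟨FreeAlgebra.lift ℂ ![opX r s, opY r s], by
    intro x y h
    have hX := opX_opZ r s
    have hY := opZ_opY r s hr
    rw [← opZ_eq r s hr hs hrs] at hX hY
    cases h
    · simpa using serre_of_left (A := Module.End ℂ Coord) (a := opX r s) (b := opY r s) hX
    · simpa using serre_of_right (A := Module.End ℂ Coord) (a := opX r s) (b := opY r s) hY⟩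

section Basis

variable (r s : ℂ) (hr : r ≠ 0) (hs : s ≠ 0) (hrs : r - s ≠ 0)

theorem rho_E₁ : rho r s hr hs hrs (E₁ r s) = opX r s := by
  simp [rho, E₁]

theorem rho_E₂ : rho r s hr hs hrs (E₂ r s) = opY r s := by
  simp [rho, E₂]

theorem rho_E₃ : rho r s hr hs hrs (E₃ r s) = opZ := by
  rw [E₃, map_sub, map_smul, map_mul, map_mul, rho_E₁, rho_E₂, opZ_eq r s hr hs hrs]

theorem rho_E₄ : rho r s hr hs hrs (E₄ r s) = opW := by
  rw [E₄, map_sub, map_smul, map_mul, map_mul, rho_E₁, rho_E₂, opW_eq r s hr hs hrs]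

/-- The coordinates of an element, read off by acting on the coordinates of `1`. -/
def toCoord : Usl3 r s →ₗ[ℂ] Coord :=
  (LinearMap.applyₗ (sg 0 0 0)).comp (rho r s hr hs hrs).toLinearMap

theorem toCoord_apply (u : Usl3 r s) :
    toCoord r s hr hs hrs u = rho r s hr hs hrs u (sg 0 0 0) := rfl

/-- The element with given coordinates. -/
def ofCoord : Coord →ₗ[ℂ] Usl3 r s := Finsupp.linearCombination ℂ (mon r s)

theorem ofCoord_sg (i j : ℕ) (n : ℤ) : ofCoord r s (sg i j n) = mon r s (i, j, n) := by
  simp [ofCoord, sg]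

theorem mon_zero : mon r s (0, 0, 0) = 1 := by simp [mon, eZ]

theorem ofCoord_opX (hr : r ≠ 0) (hrs : r - s ≠ 0) (v : Coord) :
    ofCoord r s (opX r s v) = E₁ r s * ofCoord r s v := by
  suffices (ofCoord r s) ∘ₗ (opX r s) = (LinearMap.mulLeft ℂ (E₁ r s)) ∘ₗ ofCoord r s from
    LinearMap.congr_fun this v
  refine coord_ext fun i j n => ?_
  simp only [LinearMap.comp_apply, LinearMap.mulLeft_apply, opX_sg, ofCoord_sg, map_smul]
  rw [E₁_mul_mon]
  congr 1
  split_ifs with h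
  · rw [E₁_eZ_nonneg r s h, ofCoord_sg, mon]
  · rw [E₁_eZ_neg r s (by omega), E₁_E₂ r s hrs, mon_core_smul r s hr]
    simp only [map_smul, map_sub, ofCoord_sg]

theorem ofCoord_opY (hr : r ≠ 0) (hs : s ≠ 0) (hrs : r - s ≠ 0) (v : Coord) :
    ofCoord r s (opY r s v) = E₂ r s * ofCoord r s v := by
  suffices (ofCoord r s) ∘ₗ (opY r s) = (LinearMap.mulLeft ℂ (E₂ r s)) ∘ₗ ofCoord r s from
    LinearMap.congr_fun this v
  refine coord_ext fun i j n => ?_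
  simp only [LinearMap.comp_apply, LinearMap.mulLeft_apply, opY_sg, ofCoord_sg, map_smul]
  rw [E₂_mul_mon r s hr hs]
  congr 1
  split_ifs with h
  · rw [E₂_eZ_nonpos r s h, ofCoord_sg, mon]
  · have := mon_core_smul r s hr i j (n - 1) (r - s)⁻¹ 1 1
    simp only [one_smul] at this
    rw [E₂_eZ_pos r s (by omega), E₂_E₁ r s hrs, this]
    simp only [map_smul, map_sub, ofCoord_sg]

/-- `ofCoord` intertwines `rho` with left multiplication. -/
theorem ofCoord_rho (u : Usl3 r s) (v : Coord) :
    ofCoord r s (rho r s hr hs hrs u v) = u * ofCoord r s v := by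
  obtain ⟨x, rfl⟩ := RingQuot.mkAlgHom_surjective ℂ (URel r s) u
  induction x using FreeAlgebra.induction generalizing v with
  | grade0 c => simp [Algebra.algebraMap_eq_smul_one]
  | grade1 i =>
    revert i
    rw [Fin.forall_fin_two]
    constructor
    · rw [← E₁, rho_E₁, ofCoord_opX r s hr hrs]
    · rw [← E₂, rho_E₂, ofCoord_opY r s hr hs hrs]
  | mul a b ha hb => rw [map_mul, map_mul, Module.End.mul_apply, ha, hb, mul_assoc]
  | add a b ha hb => rw [map_add, map_add, LinearMap.add_apply, map_add, ha, hb, add_mul]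

theorem ofCoord_toCoord (u : Usl3 r s) : ofCoord r s (toCoord r s hr hs hrs u) = u := by
  rw [toCoord_apply, ofCoord_rho, ofCoord_sg, mon_zero, mul_one]

theorem toCoord_mon (i j : ℕ) (n : ℤ) : toCoord r s hr hs hrs (mon r s (i, j, n)) = sg i j n := by
  have hX (m : ℕ) : (opX r s ^ m) (sg 0 0 0) = sg 0 0 m := by
    induction m with
    | zero => simp
    | succ m ih => rw [pow_succ', Module.End.mul_apply, ih, opX_sg]; simp
  have hY (m : ℕ) : (opY r s ^ m) (sg 0 0 0) = sg 0 0 (-m) := by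
    induction m with
    | zero => simp
    | succ m ih =>
      rw [pow_succ', Module.End.mul_apply, ih, opY_sg]
      simp [sub_eq_add_neg, add_comm]
  have hZ (m i j : ℕ) (n : ℤ) : (opZ ^ m) (sg i j n) = sg (i + m) j n := by
    induction m with
    | zero => simp
    | succ m ih => rw [pow_succ', Module.End.mul_apply, ih, opZ_sg, add_assoc]
  have hW (m i j : ℕ) (n : ℤ) : (opW ^ m) (sg i j n) = sg i (j + m) n := by
    induction m with
    | zero => simp
    | succ m ih => rw [pow_succ', Module.End.mul_apply, ih, opW_sg, add_assoc]
  have he : rho r s hr hs hrs (eZ r s n) (sg 0 0 0) = sg 0 0 n := by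
    obtain ⟨m, rfl | rfl⟩ := n.eq_nat_or_neg
    · rw [eZ_natCast, map_pow, rho_E₁, hX]
    · rw [eZ_neg_natCast, map_pow, rho_E₂, hY]
  rw [toCoord_apply, mon, map_mul, map_mul, map_pow, map_pow, rho_E₃, rho_E₄,
    Module.End.mul_apply, Module.End.mul_apply, he, hW, hZ, zero_add, zero_add]

end Basis

/-! ### Coefficients with respect to the monomial basis -/

/-- The parameters `r`, `s` are nonzero and multiplicatively independent. -/
structure Generic (r s : ℂ) : Prop where
  hr : r ≠ 0
  hs : s ≠ 0
  ind : ∀ m n : ℤ, r ^ m * s ^ n = 1 → m = 0 ∧ n = 0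

section Coef

variable {r s : ℂ}

theorem Generic.hrs (P : Generic r s) : r - s ≠ 0 := by
  intro h
  have := P.ind 1 (-1) (by rw [sub_eq_zero.mp h]; simp [P.hs])
  omega

theorem Generic.r_zpow (P : Generic r s) {n : ℤ} (hn : n ≠ 0) : r ^ n - 1 ≠ 0 := fun h =>
  hn (P.ind n 0 (by simpa using sub_eq_zero.mp h)).1

theorem Generic.s_zpow (P : Generic r s) {n : ℤ} (hn : n ≠ 0) : s ^ n - 1 ≠ 0 := fun h =>
  hn (P.ind 0 n (by simpa using sub_eq_zero.mp h)).2

theorem Generic.pow_eq (P : Generic r s) {i j k l : ℕ} (h : r ^ i * s ^ j = r ^ k * s ^ l) :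
    i = k ∧ j = l := by
  have hr := P.hr
  have hs := P.hs
  have := P.ind ((i : ℤ) - k) ((j : ℤ) - l) (by
    rw [zpow_sub₀ hr, zpow_sub₀ hs, zpow_natCast, zpow_natCast, zpow_natCast, zpow_natCast,
      div_mul_div_comm, h, div_self]
    positivity)
  omega

/-- The coefficient of `E₃ⁱE₄ʲeₙ`. -/
def coef (P : Generic r s) (i j : ℕ) (n : ℤ) : Usl3 r s →ₗ[ℂ] ℂ :=
  (Finsupp.lapply (i, j, n)).comp (toCoord r s P.hr P.hs P.hrs)

variable (P : Generic r s)

theorem coef_apply (i j : ℕ) (n : ℤ) (u : Usl3 r s) :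
    coef P i j n u = toCoord r s P.hr P.hs P.hrs u (i, j, n) := rfl

theorem coef_mon (i j : ℕ) (n : ℤ) (i' j' : ℕ) (n' : ℤ) :
    coef P i j n (mon r s (i', j', n')) = if i' = i ∧ j' = j ∧ n' = n then 1 else 0 := by
  rw [coef_apply, toCoord_mon, sg, Finsupp.single_apply]
  simp

theorem coef_one (i j : ℕ) : coef P i j 0 1 = if i = 0 ∧ j = 0 then 1 else 0 := by
  rw [← mon_zero r s, coef_mon]
  simp [eq_comm]

theorem coef_ext {u v : Usl3 r s} (h : ∀ i j n, coef P i j n u = coef P i j n v) : u = v := by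
  rw [← ofCoord_toCoord r s P.hr P.hs P.hrs u, ← ofCoord_toCoord r s P.hr P.hs P.hrs v]
  congr 1
  ext ⟨i, j, n⟩
  exact h i j n

theorem mon_ext (P : Generic r s) {M : Type*} [AddCommMonoid M] [Module ℂ M] {f g : Usl3 r s →ₗ[ℂ] M}
    (h : ∀ i j n, f (mon r s (i, j, n)) = g (mon r s (i, j, n))) : f = g := by
  have : f ∘ₗ ofCoord r s = g ∘ₗ ofCoord r s :=
    coord_ext fun i j n => by simpa [ofCoord_sg] using h i j n
  ext u
  rw [← ofCoord_toCoord r s P.hr P.hs P.hrs u]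
  exact LinearMap.congr_fun this _

/-- There are elements with coefficients obtained by rescaling and shifting those of a given
element. -/
theorem exists_coef (w : Usl3 r s) (d : ℕ → ℕ → ℤ → ℂ) (a b : ℕ) (c : ℤ) :
    ∃ t : Usl3 r s, ∀ i j n, coef P i j n t = d i j n * coef P (i + a) (j + b) (n + c) w := by
  have hinj : Function.Injective fun k : ℕ × ℕ × ℤ => (k.1 + a, k.2.1 + b, k.2.2 + c) := by
    rintro ⟨i, j, n⟩ ⟨i', j', n'⟩ h
    simp only [Prod.mk.injEq] at h ⊢
    omega
  have hfin : (Function.support fun k : ℕ × ℕ × ℤ =>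
      d k.1 k.2.1 k.2.2 * coef P (k.1 + a) (k.2.1 + b) (k.2.2 + c) w).Finite := by
    refine ((toCoord r s P.hr P.hs P.hrs w).support.finite_toSet.preimage
      hinj.injOn).subset fun k hk => ?_
    simpa [coef_apply] using right_ne_zero_of_mul hk
  refine ⟨ofCoord r s (Finsupp.ofSupportFinite _ hfin), fun i j n => ?_⟩
  have key (v : Coord) : toCoord r s P.hr P.hs P.hrs (ofCoord r s v) = v := by
    suffices toCoord r s P.hr P.hs P.hrs ∘ₗ ofCoord r s = LinearMap.id from
      LinearMap.congr_fun this v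
    refine coord_ext fun i j n => ?_
    simp [ofCoord_sg, toCoord_mon]
  rw [coef_apply, key]
  rfl

/-- A linear map that multiplies each monomial by a scalar depending on `n` and shifts `i`, `j` by
fixed amounts acts accordingly on coefficients. -/
theorem coef_shift (f : Usl3 r s →ₗ[ℂ] Usl3 r s) (a b : ℕ) (q : ℤ → ℂ)
    (hf : ∀ i j n, f (mon r s (i, j, n)) = q n • mon r s (i + a, j + b, n)) (u : Usl3 r s)
    (i j : ℕ) (n : ℤ) : coef P (i + a) (j + b) n (f u) = q n * coef P i j n u := by
  suffices coef P (i + a) (j + b) n ∘ₗ f = q n • coef P i j n from LinearMap.congr_fun this u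
  refine mon_ext P fun i' j' n' => ?_
  simp only [LinearMap.comp_apply, LinearMap.smul_apply, hf, map_smul, coef_mon, smul_eq_mul,
    add_left_inj]
  split_ifs with h
  · rw [h.2.2]
  · simp

theorem coef_shift_zero (f : Usl3 r s →ₗ[ℂ] Usl3 r s) (a b : ℕ) (q : ℤ → ℂ)
    (hf : ∀ i j n, f (mon r s (i, j, n)) = q n • mon r s (i + a, j + b, n)) (u : Usl3 r s)
    (i j : ℕ) (n : ℤ) (h : i < a ∨ j < b) : coef P i j n (f u) = 0 := by
  suffices coef P i j n ∘ₗ f = 0 from LinearMap.congr_fun this u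
  refine mon_ext P fun i' j' n' => ?_
  simp only [LinearMap.comp_apply, hf, map_smul, coef_mon, smul_eq_mul, LinearMap.zero_apply]
  rw [if_neg (by omega), mul_zero]

theorem coef_E₃_mul (u : Usl3 r s) (i j : ℕ) (n : ℤ) :
    coef P (i + 1) j n (E₃ r s * u) = coef P i j n u := by
  simpa using coef_shift P (LinearMap.mulLeft ℂ (E₃ r s)) 1 0 (fun _ => 1)
    (by simp [E₃_mon]) u i j n

theorem coef_E₃_mul_zero (u : Usl3 r s) (j : ℕ) (n : ℤ) :
    coef P 0 j n (E₃ r s * u) = 0 :=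
  coef_shift_zero P (LinearMap.mulLeft ℂ (E₃ r s)) 1 0 (fun _ => 1)
    (by simp [E₃_mon]) u 0 j n (by simp)

theorem coef_mul_E₃ (u : Usl3 r s) (i j : ℕ) (n : ℤ) :
    coef P (i + 1) j n (u * E₃ r s) = r ^ n * coef P i j n u := by
  simpa using coef_shift P (LinearMap.mulRight ℂ (E₃ r s)) 1 0 (fun n => r ^ n)
    (by simp [mon_E₃ r s P.hr]) u i j n

theorem coef_mul_E₃_zero (u : Usl3 r s) (j : ℕ) (n : ℤ) :
    coef P 0 j n (u * E₃ r s) = 0 :=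
  coef_shift_zero P (LinearMap.mulRight ℂ (E₃ r s)) 1 0 (fun n => r ^ n)
    (by simp [mon_E₃ r s P.hr]) u 0 j n (by simp)

theorem coef_E₄_mul (u : Usl3 r s) (i j : ℕ) (n : ℤ) :
    coef P i (j + 1) n (E₄ r s * u) = coef P i j n u := by
  simpa using coef_shift P (LinearMap.mulLeft ℂ (E₄ r s)) 0 1 (fun _ => 1)
    (by simp [E₄_mon r s P.hr]) u i j n

theorem coef_E₄_mul_zero (u : Usl3 r s) (i : ℕ) (n : ℤ) :
    coef P i 0 n (E₄ r s * u) = 0 :=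
  coef_shift_zero P (LinearMap.mulLeft ℂ (E₄ r s)) 0 1 (fun _ => 1)
    (by simp [E₄_mon r s P.hr]) u i 0 n (by simp)

theorem coef_mul_E₄ (u : Usl3 r s) (i j : ℕ) (n : ℤ) :
    coef P i (j + 1) n (u * E₄ r s) = s ^ n * coef P i j n u := by
  simpa using coef_shift P (LinearMap.mulRight ℂ (E₄ r s)) 0 1 (fun n => s ^ n)
    (by simp [mon_E₄ r s P.hs]) u i j n

theorem coef_mul_E₄_zero (u : Usl3 r s) (i : ℕ) (n : ℤ) :
    coef P i 0 n (u * E₄ r s) = 0 :=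
  coef_shift_zero P (LinearMap.mulRight ℂ (E₄ r s)) 0 1 (fun n => s ^ n)
    (by simp [mon_E₄ r s P.hs]) u i 0 n (by simp)

/-! ### The `ℤ`-grading -/

/-- The degree `n` part of `U`: the span of the `E₃ⁱE₄ʲeₙ`, for the grading in which `E₁` has
degree `1` and `E₂` has degree `-1`. -/
def deg (r s : ℂ) (n : ℤ) : Submodule ℂ (Usl3 r s) :=
  Submodule.span ℂ (Set.range fun p : ℕ × ℕ => mon r s (p.1, p.2, n))

theorem mon_mem_deg (i j : ℕ) (n : ℤ) : mon r s (i, j, n) ∈ deg r s n :=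
  Submodule.subset_span ⟨(i, j), rfl⟩

theorem mem_deg {n : ℤ} {u : Usl3 r s} (h : ∀ i j m, m ≠ n → coef P i j m u = 0) :
    u ∈ deg r s n := by
  rw [← ofCoord_toCoord r s P.hr P.hs P.hrs u, ofCoord, Finsupp.linearCombination_apply]
  refine Submodule.sum_mem _ fun k hk => Submodule.smul_mem _ _ ?_
  obtain ⟨i, j, m⟩ := k
  by_cases hm : m = n
  · exact hm ▸ mon_mem_deg i j m
  · exact absurd (h i j m hm) (by simpa [coef_apply] using hk)

theorem coef_of_mem_deg {n : ℤ} {u : Usl3 r s} (h : u ∈ deg r s n) (i j : ℕ) {m : ℤ}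
    (hm : m ≠ n) : coef P i j m u = 0 := by
  have : deg r s n ≤ LinearMap.ker (coef P i j m) := by
    rw [deg, Submodule.span_le]
    rintro _ ⟨p, rfl⟩
    simp [coef_mon, hm.symm]
  exact this h

theorem deg_ext {n : ℤ} {u v : Usl3 r s} (hu : u ∈ deg r s n) (hv : v ∈ deg r s n)
    (h : ∀ i j, coef P i j n u = coef P i j n v) : u = v := by
  refine coef_ext P fun i j m => ?_
  by_cases hm : m = n
  · exact hm ▸ h i j
  · rw [coef_of_mem_deg P hu i j hm, coef_of_mem_deg P hv i j hm]

/-- A linear map sending each monomial of degree `n` to a multiple of the one of degree `m` with the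
same `i`, `j` is diagonal on coefficients. -/
theorem deg_diag (f : Usl3 r s →ₗ[ℂ] Usl3 r s) {n m : ℤ} (c : ℕ → ℕ → ℂ)
    (hf : ∀ i j, f (mon r s (i, j, n)) = c i j • mon r s (i, j, m)) {u : Usl3 r s}
    (hu : u ∈ deg r s n) :
    f u ∈ deg r s m ∧ ∀ i j, coef P i j m (f u) = c i j * coef P i j n u := by
  induction hu using Submodule.span_induction with
  | mem x hx =>
    obtain ⟨p, rfl⟩ := hx
    rw [hf]
    refine ⟨Submodule.smul_mem _ _ (mon_mem_deg _ _ _), fun i j => ?_⟩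
    simp only [map_smul, coef_mon, smul_eq_mul, and_true]
    split_ifs with h
    · rw [h.1, h.2]
    · simp
  | zero => simp
  | add x y _ _ hx hy =>
    refine ⟨by rw [map_add]; exact Submodule.add_mem _ hx.1 hy.1, fun i j => ?_⟩
    rw [map_add, map_add, hx.2, hy.2, map_add, mul_add]
  | smul a x _ hx =>
    refine ⟨by rw [map_smul]; exact Submodule.smul_mem _ _ hx.1, fun i j => ?_⟩
    rw [map_smul, map_smul, hx.2, map_smul, smul_eq_mul, smul_eq_mul, mul_left_comm]

theorem deg_mul_E₁ {u : Usl3 r s} (hu : u ∈ deg r s 0) :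
    u * E₁ r s ∈ deg r s 1 ∧
    ∀ i j, coef P i j 1 (u * E₁ r s) = coef P i j 0 u := by
  simpa using deg_diag P (LinearMap.mulRight ℂ (E₁ r s)) (n := 0) (m := 1) (fun _ _ => 1)
    (fun i j => by simp [mon, eZ_zero, eZ_one]) hu

theorem deg_mul_E₂ {u : Usl3 r s} (hu : u ∈ deg r s 0) :
    u * E₂ r s ∈ deg r s (-1) ∧
    ∀ i j, coef P i j (-1) (u * E₂ r s) = coef P i j 0 u := by
  simpa using deg_diag P (LinearMap.mulRight ℂ (E₂ r s)) (n := 0) (m := -1) (fun _ _ => 1)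
    (fun i j => by simp [mon, eZ_zero, eZ_neg_one]) hu

theorem deg_E₁_mul {u : Usl3 r s} (hu : u ∈ deg r s 0) :
    E₁ r s * u ∈ deg r s 1 ∧
    ∀ i j, coef P i j 1 (E₁ r s * u) = r ^ i * s ^ j * coef P i j 0 u :=
  deg_diag P (LinearMap.mulLeft ℂ (E₁ r s)) (n := 0) (m := 1) (fun i j => r ^ i * s ^ j)
    (fun i j => by rw [LinearMap.mulLeft_apply, E₁_mul_mon, eZ_zero, mon, eZ_one, mul_one]) hu

theorem deg_E₂_mul {u : Usl3 r s} (hu : u ∈ deg r s 0) :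
    E₂ r s * u ∈ deg r s (-1) ∧
    ∀ i j, coef P i j (-1) (E₂ r s * u) = r⁻¹ ^ i * s⁻¹ ^ j * coef P i j 0 u :=
  deg_diag P (LinearMap.mulLeft ℂ (E₂ r s)) (n := 0) (m := -1) (fun i j => r⁻¹ ^ i * s⁻¹ ^ j)
    (fun i j => by
      rw [LinearMap.mulLeft_apply, E₂_mul_mon r s P.hr P.hs, eZ_zero, mon, eZ_neg_one, mul_one]) hu

end Coef

/-! ### Derivations -/

section Derivation

variable {r s : ℂ}

/-- Up to an inner derivation, every derivation sends `E₃` into degree zero: comparing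
coefficients in `[D E₃, E₄] = [D E₄, E₃]` shows that the nonzero-degree part of `D E₃` is a
commutator with `E₃`. -/
theorem exists_inner (P : Generic r s) (D : Usl3 r s →ₗ[ℂ] Usl3 r s)
    (hD : ∀ x y : Usl3 r s, D (x * y) = D x * y + x * D y) :
    ∃ t : Usl3 r s, D (E₃ r s) - (t * E₃ r s - E₃ r s * t) ∈ deg r s 0 := by
  obtain ⟨t, ht⟩ := exists_coef P (D (E₃ r s)) (fun _ _ n => (r ^ n - 1)⁻¹) 1 0 0
  refine ⟨t, mem_deg P fun i j n hn => ?_⟩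
  rw [map_sub, map_sub]
  rcases i with - | i
  · have hcomm := congrArg D (E₃_E₄ r s P.hr)
    rw [hD, hD] at hcomm
    have h := congrArg (coef P 0 (j + 1) n) hcomm
    rw [map_add, map_add, coef_mul_E₄, coef_E₃_mul_zero, coef_mul_E₃_zero, coef_E₄_mul] at h
    have h0 : (s ^ n - 1) * coef P 0 j n (D (E₃ r s)) = 0 := by linear_combination h
    rw [coef_mul_E₃_zero, coef_E₃_mul_zero,
      (mul_eq_zero.mp h0).resolve_left (P.s_zpow hn)]
    simp
  · rw [coef_mul_E₃, coef_E₃_mul, ht, add_zero, add_zero]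
    have := P.r_zpow hn
    field_simp
    ring

theorem D_E₄_mem (P : Generic r s) (D : Usl3 r s →ₗ[ℂ] Usl3 r s)
    (hD : ∀ x y : Usl3 r s, D (x * y) = D x * y + x * D y) (h3 : D (E₃ r s) ∈ deg r s 0) :
    D (E₄ r s) ∈ deg r s 0 := by
  refine mem_deg P fun i j n hn => ?_
  have hcomm := congrArg D (E₃_E₄ r s P.hr)
  rw [hD, hD] at hcomm
  have h := congrArg (coef P (i + 1) j n) hcomm
  rw [map_add, map_add, coef_E₃_mul, coef_mul_E₃] at h
  have h0 : coef P (i + 1) j n (D (E₃ r s) * E₄ r s) = 0 := by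
    rcases j with - | j
    · rw [coef_mul_E₄_zero]
    · rw [coef_mul_E₄, coef_of_mem_deg P h3 _ _ hn, mul_zero]
  have h1 : coef P (i + 1) j n (E₄ r s * D (E₃ r s)) = 0 := by
    rcases j with - | j
    · rw [coef_E₄_mul_zero]
    · rw [coef_E₄_mul, coef_of_mem_deg P h3 _ _ hn]
  have h2 : (r ^ n - 1) * coef P i j n (D (E₄ r s)) = 0 := by
    linear_combination h0 - h1 - h
  exact (mul_eq_zero.mp h2).resolve_left (P.r_zpow hn)

theorem zpow_ne (P : Generic r s) {n m : ℤ} (hn : n ≠ m) : r ^ n - r ^ m ≠ 0 := by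
  have h := P.r_zpow (sub_ne_zero.mpr hn)
  rw [zpow_sub₀ P.hr] at h
  intro h'
  apply h
  rw [sub_eq_zero.mp h', div_self (zpow_ne_zero _ P.hr), sub_self]

/-- If `D E₃` has degree zero then `D E₁` has degree one and `D E₃` is a multiple of `E₃`. -/
theorem D_E₁_mem (P : Generic r s) (D : Usl3 r s →ₗ[ℂ] Usl3 r s)
    (hD : ∀ x y : Usl3 r s, D (x * y) = D x * y + x * D y) (h3 : D (E₃ r s) ∈ deg r s 0) :
    D (E₁ r s) ∈ deg r s 1 ∧ ∃ α : ℂ, D (E₃ r s) = α • E₃ r s := by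
  have hrel := congrArg D (E₁_E₃ r s)
  rw [map_smul, hD, hD, smul_add] at hrel
  have hR := deg_mul_E₁ P h3
  have hL := deg_E₁_mul P h3
  refine ⟨mem_deg P fun i j n hn => ?_, coef P 1 0 0 (D (E₃ r s)), ?_⟩
  · have h := congrArg (coef P (i + 1) j n) hrel
    rw [map_add, map_add, map_smul, map_smul, coef_mul_E₃, coef_E₃_mul,
      coef_of_mem_deg P hR.1 _ _ hn, coef_of_mem_deg P hL.1 _ _ hn, smul_eq_mul, smul_eq_mul] at h
    have h0 : (r ^ n - r ^ (1 : ℤ)) * coef P i j n (D (E₁ r s)) = 0 := by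
      rw [zpow_one]
      linear_combination h
    exact (mul_eq_zero.mp h0).resolve_left (zpow_ne P hn)
  · have hE : E₃ r s = mon r s (1, 0, 0) := by simp [mon, eZ_zero]
    refine deg_ext P h3 (Submodule.smul_mem _ _ (hE ▸ mon_mem_deg 1 0 0)) fun i j => ?_
    have h := congrArg (coef P i j 1) hrel
    rw [map_add, map_add, map_smul, map_smul, hR.2, hL.2, smul_eq_mul, smul_eq_mul] at h
    have h0 : coef P i j 1 (D (E₁ r s) * E₃ r s) = r * coef P i j 1 (E₃ r s * D (E₁ r s)) := by
      rcases i with - | i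
      · rw [coef_mul_E₃_zero, coef_E₃_mul_zero, mul_zero]
      · rw [coef_mul_E₃, coef_E₃_mul, zpow_one]
    have h1 : (r ^ i * s ^ j - r) * coef P i j 0 (D (E₃ r s)) = 0 := by
      linear_combination h - h0
    rw [map_smul, hE, coef_mon, ← hE]
    by_cases hij : 1 = i ∧ 0 = j
    · obtain ⟨rfl, rfl⟩ := hij
      simp
    · have h2 : r ^ i * s ^ j - r ≠ 0 := by
        intro h2
        have := P.pow_eq (i := i) (j := j) (k := 1) (l := 0)
          (by simpa using sub_eq_zero.mp h2)
        omega
      rw [(mul_eq_zero.mp h1).resolve_left h2, if_neg (by omega), smul_zero]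

/-- If `D E₄` has degree zero then it is a multiple of `E₄`. -/
theorem D_E₄_eq (P : Generic r s) (D : Usl3 r s →ₗ[ℂ] Usl3 r s)
    (hD : ∀ x y : Usl3 r s, D (x * y) = D x * y + x * D y) (h4 : D (E₄ r s) ∈ deg r s 0) :
    ∃ β : ℂ, D (E₄ r s) = β • E₄ r s := by
  have hrel := congrArg D (E₁_E₄ r s)
  rw [map_smul, hD, hD, smul_add] at hrel
  have hR := deg_mul_E₁ P h4
  have hL := deg_E₁_mul P h4
  refine ⟨coef P 0 1 0 (D (E₄ r s)), ?_⟩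
  have hE : E₄ r s = mon r s (0, 1, 0) := by simp [mon, eZ_zero]
  refine deg_ext P h4 (Submodule.smul_mem _ _ (hE ▸ mon_mem_deg 0 1 0)) fun i j => ?_
  have h := congrArg (coef P i j 1) hrel
  rw [map_add, map_add, map_smul, map_smul, hR.2, hL.2, smul_eq_mul, smul_eq_mul] at h
  have h0 : coef P i j 1 (D (E₁ r s) * E₄ r s) = s * coef P i j 1 (E₄ r s * D (E₁ r s)) := by
    rcases j with - | j
    · rw [coef_mul_E₄_zero, coef_E₄_mul_zero, mul_zero]
    · rw [coef_mul_E₄, coef_E₄_mul, zpow_one]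
  have h1 : (r ^ i * s ^ j - s) * coef P i j 0 (D (E₄ r s)) = 0 := by
    linear_combination h - h0
  rw [map_smul, hE, coef_mon, ← hE]
  by_cases hij : 0 = i ∧ 1 = j
  · obtain ⟨rfl, rfl⟩ := hij
    simp
  · have h2 : r ^ i * s ^ j - s ≠ 0 := by
      intro h2
      have := P.pow_eq (i := i) (j := j) (k := 0) (l := 1)
        (by simpa using sub_eq_zero.mp h2)
      omega
    rw [(mul_eq_zero.mp h1).resolve_left h2, if_neg (by omega), smul_zero]

theorem D_E₂_mem (P : Generic r s) (D : Usl3 r s →ₗ[ℂ] Usl3 r s)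
    (hD : ∀ x y : Usl3 r s, D (x * y) = D x * y + x * D y) {α : ℂ}
    (h3 : D (E₃ r s) = α • E₃ r s) : D (E₂ r s) ∈ deg r s (-1) := by
  refine mem_deg P fun i j n hn => ?_
  have hrel := congrArg D (E₂_E₃ r s P.hr)
  rw [map_smul, hD, hD, smul_add, h3, mul_smul_comm, smul_mul_assoc, E₂_E₃ r s P.hr,
    smul_comm α, add_comm, add_right_inj] at hrel
  have h := congrArg (coef P (i + 1) j n) hrel
  rw [map_smul, coef_mul_E₃, coef_E₃_mul, smul_eq_mul] at h
  have h0 : (r ^ n - r ^ (-1 : ℤ)) * coef P i j n (D (E₂ r s)) = 0 := by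
    rw [zpow_neg_one]
    linear_combination h
  exact (mul_eq_zero.mp h0).resolve_left (zpow_ne P hn)

/-- For `w` of degree `m`, the element `F` is the quotient of `w` by `eₘ` on the right. -/
theorem exists_deg_zero (P : Generic r s) {m : ℤ} (w : Usl3 r s) :
    ∃ F ∈ deg r s 0, ∀ i j, coef P i j 0 F = coef P i j m w := by
  obtain ⟨F, hF⟩ := exists_coef P w (fun _ _ n => if n = 0 then 1 else 0) 0 0 m
  exact ⟨F, mem_deg P fun i j n hn => by simp [hF, hn], fun i j => by simp [hF]⟩

theorem exists_deg_zero_smul (P : Generic r s) {F : Usl3 r s} (hF : F ∈ deg r s 0) (d : ℕ → ℕ → ℂ) :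
    ∃ G ∈ deg r s 0, ∀ i j, coef P i j 0 G = d i j * coef P i j 0 F := by
  obtain ⟨G, hG⟩ := exists_coef P F (fun i j _ => d i j) 0 0 0
  exact ⟨G, mem_deg P fun i j n hn => by simp [hG, coef_of_mem_deg P hF i j hn],
    fun i j => by simp [hG]⟩

/-- If `G (E₃ - E₄) = αE₃ - βE₄`, then `G` has degree-zero part `α`: the coefficients of `G - α`
vanish at `j = 0` and are constant along the antidiagonals. -/
theorem coef_of_mul_sub (P : Generic r s) {G : Usl3 r s} {α β : ℂ}
    (h : G * (E₃ r s - E₄ r s) = α • E₃ r s - β • E₄ r s) (i j : ℕ) :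
    coef P i j 0 G = if i = 0 ∧ j = 0 then α else 0 := by
  have hK : (G - α • 1) * E₃ r s - (G - α • 1) * E₄ r s = (α - β) • (E₄ r s * 1) := by
    rw [← mul_sub, sub_mul, h, smul_mul_assoc, one_mul, mul_one]
    module
  have hz (i j : ℕ) : coef P i j 0 (G - α • 1) = 0 := by
    induction j generalizing i with
    | zero =>
      have := congrArg (coef P (i + 1) 0 0) hK
      rw [map_sub, map_smul, coef_mul_E₃, coef_mul_E₄_zero, coef_E₄_mul_zero] at this
      simpa using this
    | succ j ih =>
      have := congrArg (coef P (i + 1) (j + 1) 0) hK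
      rw [map_sub, map_smul, coef_mul_E₃, coef_mul_E₄, coef_E₄_mul, coef_one, ih] at this
      simpa using this
  have := hz i j
  rw [map_sub, map_smul, coef_one, sub_eq_zero] at this
  rw [this]
  split_ifs <;> simp

/-- A derivation mapping `E₃` into degree zero is, on the generators, the sum of an inner
derivation by a degree-zero element and a diagonal one. -/
theorem exists_of_deg_zero (P : Generic r s) (D : Usl3 r s →ₗ[ℂ] Usl3 r s)
    (hD : ∀ x y : Usl3 r s, D (x * y) = D x * y + x * D y) (h3 : D (E₃ r s) ∈ deg r s 0) :
    ∃ (t : Usl3 r s) (μ₁ μ₂ : ℂ),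
      D (E₁ r s) = t * E₁ r s - E₁ r s * t + μ₁ • E₁ r s ∧
      D (E₂ r s) = t * E₂ r s - E₂ r s * t + μ₂ • E₂ r s := by
  obtain ⟨hD1, α, hα⟩ := D_E₁_mem P D hD h3
  obtain ⟨β, hβ⟩ := D_E₄_eq P D hD (D_E₄_mem P D hD h3)
  have hD2 := D_E₂_mem P D hD hα
  obtain ⟨F, hF, hFc⟩ := exists_deg_zero P (m := 1) (D (E₁ r s))
  obtain ⟨H, hH, hHc⟩ := exists_deg_zero P (m := -1) (D (E₂ r s))
  obtain ⟨F', hF', hFc'⟩ := exists_deg_zero_smul P hF fun i j => r⁻¹ ^ i * s⁻¹ ^ j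
  -- The eigenvalue `r ^ i * s ^ j` equals `1` only for `i = j = 0`, where the inverse is zero.
  obtain ⟨t, ht, htc⟩ := exists_deg_zero_smul P hF fun i j => (1 - r ^ i * s ^ j)⁻¹
  have hFX : D (E₁ r s) = F * E₁ r s :=
    deg_ext P hD1 (deg_mul_E₁ P hF).1 fun i j => by rw [(deg_mul_E₁ P hF).2, hFc]
  have hHY : D (E₂ r s) = H * E₂ r s :=
    deg_ext P hD2 (deg_mul_E₂ P hH).1 fun i j => by rw [(deg_mul_E₂ P hH).2, hHc]
  have hYF : E₂ r s * F = F' * E₂ r s :=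
    deg_ext P (deg_E₂_mul P hF).1 (deg_mul_E₂ P hF').1 fun i j => by
      rw [(deg_E₂_mul P hF).2, (deg_mul_E₂ P hF').2, hFc']
  have hG : (H + F') * (E₃ r s - E₄ r s) = α • E₃ r s - β • E₄ r s := by
    have h := congrArg D (E₂_E₁ r s P.hrs)
    rw [hD, hFX, hHY, ← mul_assoc, hYF, mul_assoc, mul_assoc, ← add_mul, map_smul, map_sub, hα, hβ,
      E₂_E₁ r s P.hrs, mul_smul_comm] at h
    exact smul_right_injective _ (inv_ne_zero P.hrs) h
  have hHcoef (i j : ℕ) : coef P i j 0 H =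
      (if i = 0 ∧ j = 0 then α else 0) - r⁻¹ ^ i * s⁻¹ ^ j * coef P i j 0 F := by
    have h := coef_of_mul_sub P hG i j
    rw [map_add, hFc'] at h
    linear_combination h
  have h1 : (1 : Usl3 r s) ∈ deg r s 0 := mon_zero r s ▸ mon_mem_deg 0 0 0
  have hne {i j : ℕ} (hij : ¬(i = 0 ∧ j = 0)) : 1 - r ^ i * s ^ j ≠ 0 := fun h =>
    hij (P.pow_eq (k := 0) (l := 0) (by simpa using (sub_eq_zero.mp h).symm))
  refine ⟨t, coef P 0 0 0 F, α - coef P 0 0 0 F, ?_, ?_⟩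
  · obtain ⟨a1, a2⟩ := deg_mul_E₁ P ht
    obtain ⟨b1, b2⟩ := deg_E₁_mul P ht
    obtain ⟨c1, c2⟩ := deg_mul_E₁ P h1
    rw [one_mul] at c1 c2
    refine deg_ext P hD1 (Submodule.add_mem _ (Submodule.sub_mem _ a1 b1)
      (Submodule.smul_mem _ _ c1)) fun i j => ?_
    rw [map_add, map_sub, map_smul, a2, b2, c2, htc, ← hFc, coef_one]
    by_cases hij : i = 0 ∧ j = 0
    · obtain ⟨rfl, rfl⟩ := hij
      simp
    · have := hne hij
      rw [if_neg hij]
      simp only [smul_eq_mul]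
      field_simp
      ring
  · obtain ⟨a1, a2⟩ := deg_mul_E₂ P ht
    obtain ⟨b1, b2⟩ := deg_E₂_mul P ht
    obtain ⟨c1, c2⟩ := deg_mul_E₂ P h1
    rw [one_mul] at c1 c2
    refine deg_ext P hD2 (Submodule.add_mem _ (Submodule.sub_mem _ a1 b1)
      (Submodule.smul_mem _ _ c1)) fun i j => ?_
    rw [map_add, map_sub, map_smul, a2, b2, c2, htc, ← hHc, hHcoef, coef_one]
    by_cases hij : i = 0 ∧ j = 0
    · obtain ⟨rfl, rfl⟩ := hij
      simp
    · have := hne hij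
      have hr := P.hr
      have hs := P.hs
      rw [if_neg hij, if_neg hij]
      simp only [smul_eq_mul, inv_pow]
      field_simp
      ring

end Derivation

end Usl3Der

/-- every derivation `D` of `U⁺_{r,s}(sl₃)` is of the form
`ad_t + μ₁D₁ + μ₂D₂`: there are `t ∈ U` and `μ₁, μ₂ ∈ ℂ` with
`D(E₁) = tE₁ - E₁t + μ₁E₁`, `D(E₂) = tE₂ - E₂t + μ₂E₂` and moreover
`D(E₃) = tE₃ - E₃t + (μ₁ + μ₂)E₃`. -/
theorem stmt17 (r s : ℂ) (hr : r ≠ 0) (hs : s ≠ 0)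
    (hind : ∀ m n : ℤ, r ^ m * s ^ n = 1 → m = 0 ∧ n = 0)
    (D : Usl3 r s →ₗ[ℂ] Usl3 r s)
    (hD : ∀ x y : Usl3 r s, D (x * y) = D x * y + x * D y) :
    ∃ (t : Usl3 r s) (μ₁ μ₂ : ℂ),
      D (E₁ r s) = t * E₁ r s - E₁ r s * t + μ₁ • E₁ r s ∧
      D (E₂ r s) = t * E₂ r s - E₂ r s * t + μ₂ • E₂ r s ∧
      D (E₃ r s) = t * E₃ r s - E₃ r s * t + (μ₁ + μ₂) • E₃ r s := by
  have P : Usl3Der.Generic r s := ⟨hr, hs, hind⟩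
  obtain ⟨t₀, ht₀⟩ := Usl3Der.exists_inner P D hD
  obtain ⟨t, μ₁, μ₂, h1, h2⟩ := Usl3Der.exists_of_deg_zero P
    (D - (LinearMap.mulLeft ℂ t₀ - LinearMap.mulRight ℂ t₀))
    (fun x y => by
      simp only [LinearMap.sub_apply, LinearMap.mulLeft_apply, LinearMap.mulRight_apply, hD]
      simp only [mul_sub, sub_mul, mul_assoc]
      abel)
    (by simpa using ht₀)
  simp only [LinearMap.sub_apply, LinearMap.mulLeft_apply, LinearMap.mulRight_apply] at h1 h2
  rw [sub_eq_iff_eq_add] at h1 h2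
  refine ⟨t + t₀, μ₁, μ₂, by rw [h1]; noncomm_ring, by rw [h2]; noncomm_ring, ?_⟩
  rw [E₃, map_sub, map_smul, hD, hD, h1, h2]
  simp only [mul_add, add_mul, mul_sub, sub_mul, mul_smul_comm, smul_mul_assoc, mul_assoc]
  module
end
end
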